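/- There exist constants C > 0 and λ₀ > 0, depending only on α and β, such that for every real Dirichlet quasimode datum (u, λ, f) on the stadium S with λ ≥ λ₀ and ‖u‖_{L²(S)} = 1, one has ‖f‖²_{L²(S)} + λ⁸ ‖u‖²_{L²(W)} ≥ C, where ‖u‖_{L²(W)} is the L² norm of u over the wings W. -/

import Mathlib

open MeasureTheory Real Set Filter

noncomputable section

/-- Partial derivative in the first (x) variable. -/
def pdx (u : ℝ × ℝ → ℝ) (p : ℝ × ℝ) : ℝ := deriv (fun t => u (t, p.2)) p.1

/-- Partial derivative in the second (y) variable. -/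
def pdy (u : ℝ × ℝ → ℝ) (p : ℝ × ℝ) : ℝ := deriv (fun t => u (p.1, t)) p.2

/-- The positive Laplacian `Δu = -u_xx - u_yy`. -/
def lap (u : ℝ × ℝ → ℝ) (p : ℝ × ℝ) : ℝ := -(pdx (pdx u) p) - (pdy (pdy u) p)

/-- The central rectangle `R = [-α,α] × [-β,β]`. -/
def Rect (α β : ℝ) : Set (ℝ × ℝ) := Icc (-α) α ×ˢ Icc (-β) β

/-- The wings `W = W₊ ∪ W₋`, two half-discs of radius β centered at `(±α, 0)`. -/
def Wings (α β : ℝ) : Set (ℝ × ℝ) :=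
  {p | (p.1 - α) ^ 2 + p.2 ^ 2 ≤ β ^ 2 ∧ α ≤ p.1} ∪
  {p | (p.1 + α) ^ 2 + p.2 ^ 2 ≤ β ^ 2 ∧ p.1 ≤ -α}

/-- The Bunimovich stadium `S = R ∪ W`. -/
def Stadium (α β : ℝ) : Set (ℝ × ℝ) := Rect α β ∪ Wings α β

/-- The boundary `∂S`: two horizontal segments and two semicircles. -/
def StadiumBoundary (α β : ℝ) : Set (ℝ × ℝ) :=
  {p | |p.1| ≤ α ∧ (p.2 = β ∨ p.2 = -β)} ∪
  {p | (|p.1| - α) ^ 2 + p.2 ^ 2 = β ^ 2 ∧ α ≤ |p.1|}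

/-- Boundary integral `∫_{∂S} g dl` of an integrand `g` depending on the boundary point
and the outward unit normal at that point. -/
def bdryInt (α β : ℝ) (g : ℝ × ℝ → ℝ × ℝ → ℝ) : ℝ :=
  (∫ x in (-α)..α, (g (x, β) (0, 1) + g (x, -β) (0, -1))) +
  β * ∫ θ in (-(π / 2))..(π / 2),
    (g (α + β * cos θ, β * sin θ) (cos θ, sin θ) +
     g (-(α + β * cos θ), β * sin θ) (-cos θ, sin θ))

/-- Boundary integral `∫_{∂S ∩ W} g dl` over the two semicircles only. -/
def bdryIntW (α β : ℝ) (g : ℝ × ℝ → ℝ × ℝ → ℝ) : ℝ :=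
  β * ∫ θ in (-(π / 2))..(π / 2),
    (g (α + β * cos θ, β * sin θ) (cos θ, sin θ) +
     g (-(α + β * cos θ), β * sin θ) (-cos θ, sin θ))

/-- The normal derivative `∂_N u = n₁ ∂_x u + n₂ ∂_y u` at a boundary point `p`
with outward unit normal `n`. -/
def nderiv (u : ℝ × ℝ → ℝ) (p n : ℝ × ℝ) : ℝ := n.1 * pdx u p + n.2 * pdy u p

/-- A real Dirichlet quasimode datum `(u, λ, f)` on the stadium: `λ > 0`, `u` smooth on a
neighborhood of `S`, `u = 0` on `∂S`, and `(Δ - λ²) u = f` on `S`. -/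
structure QMDatum (α β : ℝ) where
  u : ℝ × ℝ → ℝ
  lam : ℝ
  f : ℝ × ℝ → ℝ
  lam_pos : 0 < lam
  smooth : ∃ V : Set (ℝ × ℝ), IsOpen V ∧ Stadium α β ⊆ V ∧ ContDiffOn ℝ (⊤ : ℕ∞) u V
  dirichlet : ∀ p ∈ StadiumBoundary α β, u p = 0
  eqn : ∀ p ∈ Stadium α β, lap u p - lam ^ 2 * u p = f p

/-! ### Geometry and slicing -/

def wf (α : ℝ) (x : ℝ) : ℝ := max (|x| - α) 0

def sf (α : ℝ) (x : ℝ) : ℝ := if α < x then 1 else if x < -α then -1 else 0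

lemma wf_cont (α : ℝ) : Continuous (wf α) := by unfold wf; fun_prop

lemma sf_meas (α : ℝ) : Measurable (sf α) := by
  unfold sf
  exact Measurable.ite measurableSet_Ioi measurable_const
    (Measurable.ite measurableSet_Iio measurable_const measurable_const)

lemma sf_cases {α : ℝ} (hα : 0 < α) (x : ℝ) :
    (sf α x = 1 ∧ wf α x = x - α ∧ α < x) ∨ (sf α x = -1 ∧ wf α x = -x - α ∧ x < -α) ∨
    (sf α x = 0 ∧ wf α x = 0 ∧ -α ≤ x ∧ x ≤ α) := by
  unfold sf wf
  by_cases h1 : α < x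
  · left
    have : |x| = x := abs_of_pos (by linarith)
    simp [h1, this]; linarith
  · by_cases h2 : x < -α
    · right; left
      have : |x| = -x := abs_of_neg (by linarith)
      simp [h1, h2, this]; linarith
    · right; right
      have : |x| ≤ α := abs_le.2 ⟨by linarith, by linarith⟩
      simp [h1, h2, this]; constructor <;> linarith

lemma wf_hasDeriv {α : ℝ} (hα : 0 < α) {x : ℝ} (h1 : x ≠ α) (h2 : x ≠ -α) :
    HasDerivAt (wf α) (sf α x) x := by
  rcases sf_cases hα x with ⟨hs, -, h⟩ | ⟨hs, -, h⟩ | ⟨hs, -, h, h'⟩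
  · rw [hs]
    have : HasDerivAt (fun t : ℝ => t - α) 1 x := (hasDerivAt_id x).sub_const α
    refine this.congr_of_eventuallyEq ?_
    filter_upwards [lt_mem_nhds h] with t ht
    rcases sf_cases hα t with ⟨_, h3, _⟩ | ⟨_, _, h3⟩ | ⟨_, _, _, h3⟩ <;> linarith
  · rw [hs]
    have : HasDerivAt (fun t : ℝ => -t - α) (-1) x := (hasDerivAt_id x).neg.sub_const α
    refine this.congr_of_eventuallyEq ?_
    filter_upwards [gt_mem_nhds h] with t ht
    rcases sf_cases hα t with ⟨_, _, h3⟩ | ⟨_, h3, _⟩ | ⟨_, _, h3, _⟩ <;> linarith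
  · rw [hs]
    have : HasDerivAt (fun _ : ℝ => (0 : ℝ)) 0 x := hasDerivAt_const x 0
    refine this.congr_of_eventuallyEq ?_
    have ha : -α < x := lt_of_le_of_ne h (Ne.symm h2)
    have hb : x < α := lt_of_le_of_ne h' h1
    filter_upwards [lt_mem_nhds ha, gt_mem_nhds hb] with t ht ht'
    rcases sf_cases hα t with ⟨_, _, h3⟩ | ⟨_, _, h3⟩ | ⟨_, h3, _, _⟩ <;> linarith

def kf (β : ℝ) (y : ℝ) : ℝ := √(β ^ 2 - y ^ 2)

def hf (α β : ℝ) (x : ℝ) : ℝ := √(β ^ 2 - wf α x ^ 2)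

lemma kf_nonneg (β y : ℝ) : 0 ≤ kf β y := Real.sqrt_nonneg _
lemma hf_nonneg (α β x : ℝ) : 0 ≤ hf α β x := Real.sqrt_nonneg _
lemma kf_cont (β : ℝ) : Continuous (kf β) := by unfold kf; fun_prop
lemma hf_cont (α β : ℝ) : Continuous (hf α β) := by
  unfold hf
  have := wf_cont α
  fun_prop

lemma kf_le {β : ℝ} (hβ : 0 < β) (y : ℝ) : kf β y ≤ β := by
  unfold kf
  rw [Real.sqrt_le_left hβ.le]
  nlinarith [sq_nonneg y]

lemma kf_sq {β y : ℝ} (h1 : -β ≤ y) (h2 : y ≤ β) : kf β y ^ 2 = β ^ 2 - y ^ 2 := by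
  unfold kf
  exact Real.sq_sqrt (by nlinarith)

lemma wf_nonneg (α x : ℝ) : 0 ≤ wf α x := le_max_right _ _

lemma wf_le {α β x : ℝ} (hβ : 0 < β) (h : |x| ≤ α + β) : wf α x ≤ β :=
  max_le (by linarith) hβ.le

lemma hf_sq {α β x : ℝ} (hβ : 0 < β) (h : |x| ≤ α + β) :
    hf α β x ^ 2 = β ^ 2 - wf α x ^ 2 := by
  unfold hf
  exact Real.sq_sqrt (by nlinarith [wf_le hβ h, wf_nonneg α x])

lemma hf_le {α β : ℝ} (hβ : 0 < β) (x : ℝ) : hf α β x ≤ β := by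
  unfold hf
  rw [Real.sqrt_le_left hβ.le]
  nlinarith [sq_nonneg (wf α x)]

lemma mem_Stadium {α β : ℝ} (hα : 0 < α) (hβ : 0 < β) (x y : ℝ) :
    (x, y) ∈ Stadium α β ↔ wf α x ^ 2 + y ^ 2 ≤ β ^ 2 := by
  simp only [Stadium, Rect, Wings, mem_union, mem_prod, mem_Icc, mem_ofPred_eq]
  rcases sf_cases hα x with ⟨_, hw, h⟩ | ⟨_, hw, h⟩ | ⟨_, hw, h, h'⟩
  · rw [hw]
    constructor
    · rintro (⟨⟨_, h2⟩, _⟩ | ⟨h1, _⟩ | ⟨_, h2⟩)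
      · linarith
      · exact h1
      · linarith
    · intro h2; exact Or.inr (Or.inl ⟨h2, h.le⟩)
  · rw [hw]
    constructor
    · rintro (⟨⟨h2, _⟩, _⟩ | ⟨_, h2⟩ | ⟨h1, _⟩)
      · linarith
      · linarith
      · linarith [show (-x - α) ^ 2 = (x + α) ^ 2 by ring]
    · intro h2
      exact Or.inr (Or.inr ⟨by linarith [show (-x - α) ^ 2 = (x + α) ^ 2 by ring], h.le⟩)
  · rw [hw]
    have key : (-β ≤ y ∧ y ≤ β) ↔ y ^ 2 ≤ β ^ 2 := by
      rw [← abs_le, sq_le_sq, abs_of_pos hβ]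
    constructor
    · rintro (⟨_, h2⟩ | ⟨h1, h2⟩ | ⟨h1, h2⟩)
      · linarith [key.1 h2]
      · nlinarith [sq_nonneg (x - α)]
      · nlinarith [sq_nonneg (x + α)]
    · intro h2
      exact Or.inl ⟨⟨h, h'⟩, key.2 (by linarith)⟩

lemma mem_Stadium1 {α β : ℝ} (hα : 0 < α) (hβ : 0 < β) (x y : ℝ) :
    (x, y) ∈ Stadium α β ↔ y ∈ Icc (-β) β ∧ x ∈ Icc (-(α + kf β y)) (α + kf β y) := by
  rw [mem_Stadium hα hβ, mem_Icc, mem_Icc, ← abs_le, ← abs_le]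
  have hw := wf_nonneg α x
  constructor
  · intro h
    have hy : |y| ≤ β := abs_le_of_sq_le_sq (by nlinarith) hβ.le
    refine ⟨hy, ?_⟩
    have h1 : wf α x ≤ kf β y := Real.le_sqrt_of_sq_le (by linarith)
    have h2 : |x| - α ≤ wf α x := le_max_left _ _
    linarith
  · rintro ⟨hy, hx⟩
    have hy' := abs_le.1 hy
    have h1 : wf α x ≤ kf β y := max_le (by linarith) (kf_nonneg _ _)
    have h2 := kf_sq hy'.1 hy'.2
    nlinarith

lemma mem_Stadium2 {α β : ℝ} (hα : 0 < α) (hβ : 0 < β) (x y : ℝ) :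
    (x, y) ∈ Stadium α β ↔
      x ∈ Icc (-(α + β)) (α + β) ∧ y ∈ Icc (-(hf α β x)) (hf α β x) := by
  rw [mem_Stadium hα hβ, mem_Icc, mem_Icc, ← abs_le, ← abs_le]
  have hw := wf_nonneg α x
  constructor
  · intro h
    have h1 : wf α x ≤ β := by
      have := abs_le_of_sq_le_sq (a := wf α x) (b := β) (by nlinarith) hβ.le
      exact (le_abs_self _).trans this
    have h2 : |x| - α ≤ wf α x := le_max_left _ _
    refine ⟨by linarith, ?_⟩
    exact Real.le_sqrt_of_sq_le (by rw [sq_abs]; linarith)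
  · rintro ⟨hx, hy⟩
    have h1 := hf_sq hβ hx
    have := abs_nonneg y
    nlinarith [sq_abs y]

lemma Stadium_closed {α β : ℝ} (hα : 0 < α) (hβ : 0 < β) : IsClosed (Stadium α β) := by
  have : Stadium α β = {p : ℝ × ℝ | wf α p.1 ^ 2 + p.2 ^ 2 ≤ β ^ 2} := by
    ext ⟨x, y⟩; exact mem_Stadium hα hβ x y
  rw [this]
  have := wf_cont α
  exact isClosed_le (by fun_prop) (by fun_prop)

lemma Stadium_box {α β : ℝ} (hα : 0 < α) (hβ : 0 < β) {p : ℝ × ℝ} (hp : p ∈ Stadium α β) :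
    |p.1| ≤ α + β ∧ |p.2| ≤ α + β := by
  obtain ⟨x, y⟩ := p
  have h1 := (mem_Stadium1 hα hβ x y).1 hp
  have h2 := (mem_Stadium2 hα hβ x y).1 hp
  exact ⟨abs_le.2 h2.1, (abs_le.2 h1.1).trans (by linarith)⟩

lemma Stadium_compact {α β : ℝ} (hα : 0 < α) (hβ : 0 < β) : IsCompact (Stadium α β) := by
  have hK : IsCompact (Icc (-(α+β)) (α+β) ×ˢ Icc (-(α+β)) (α+β)) :=
    isCompact_Icc.prod isCompact_Icc
  refine hK.of_isClosed_subset (Stadium_closed hα hβ) ?_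
  intro p hp
  have := Stadium_box hα hβ hp
  exact ⟨abs_le.1 this.1, abs_le.1 this.2⟩

/-- locally bounded measurable -/
def LB (g : ℝ × ℝ → ℝ) : Prop :=
  Measurable g ∧ ∀ r : ℝ, ∃ M, ∀ p : ℝ × ℝ, |p.1| ≤ r → |p.2| ≤ r → |g p| ≤ M

lemma LB.of_cont {g : ℝ × ℝ → ℝ} (h : Continuous g) : LB g := by
  refine ⟨h.measurable, fun r => ?_⟩
  have hK : IsCompact (Icc (-r) r ×ˢ Icc (-r) r) := isCompact_Icc.prod isCompact_Icc
  obtain ⟨M, hM⟩ := hK.exists_bound_of_continuousOn h.continuousOn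
  exact ⟨M, fun p h1 h2 => hM p ⟨abs_le.1 h1, abs_le.1 h2⟩⟩

lemma LB.add {g h : ℝ × ℝ → ℝ} (hg : LB g) (hh : LB h) : LB (fun p => g p + h p) := by
  refine ⟨hg.1.add hh.1, fun r => ?_⟩
  obtain ⟨M, hM⟩ := hg.2 r
  obtain ⟨N, hN⟩ := hh.2 r
  exact ⟨M + N, fun p h1 h2 => (abs_add_le _ _).trans (add_le_add (hM p h1 h2) (hN p h1 h2))⟩

lemma LB.mul {g h : ℝ × ℝ → ℝ} (hg : LB g) (hh : LB h) : LB (fun p => g p * h p) := by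
  refine ⟨hg.1.mul hh.1, fun r => ?_⟩
  obtain ⟨M, hM⟩ := hg.2 r
  obtain ⟨N, hN⟩ := hh.2 r
  refine ⟨M * N, fun p h1 h2 => ?_⟩
  rw [abs_mul]
  exact mul_le_mul (hM p h1 h2) (hN p h1 h2) (abs_nonneg _) ((abs_nonneg _).trans (hM p h1 h2))

lemma LB.const (c : ℝ) : LB (fun _ => c) := LB.of_cont continuous_const

lemma LB.sub {g h : ℝ × ℝ → ℝ} (hg : LB g) (hh : LB h) : LB (fun p => g p - h p) := by
  have := hg.add ((LB.const (-1)).mul hh)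
  convert this using 2; ring

lemma LB.neg {g : ℝ × ℝ → ℝ} (hg : LB g) : LB (fun p => - g p) := by
  have := (LB.const (-1)).mul hg
  convert this using 2; ring

lemma LB.pow2 {g : ℝ × ℝ → ℝ} (hg : LB g) : LB (fun p => g p ^ 2) := by
  have := hg.mul hg
  convert this using 2; ring

lemma LB.sf (α : ℝ) : LB (fun p => sf α p.1) := by
  refine ⟨(sf_meas α).comp measurable_fst, fun r => ⟨1, fun p _ _ => ?_⟩⟩
  show |_root_.sf α p.1| ≤ 1
  unfold _root_.sf
  split_ifs <;> simp

lemma LB.integrableOn {α β : ℝ} (hα : 0 < α) (hβ : 0 < β) {g : ℝ × ℝ → ℝ} (hg : LB g) :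
    IntegrableOn g (Stadium α β) := by
  obtain ⟨M, hM⟩ := hg.2 (α + β)
  refine Measure.integrableOn_of_bounded (M := M) (Stadium_compact hα hβ).measure_lt_top.ne
    hg.1.aestronglyMeasurable ?_
  refine (ae_restrict_iff' (Stadium_closed hα hβ).measurableSet).2 (Eventually.of_forall ?_)
  intro p hp
  have := Stadium_box hα hβ hp
  exact hM p this.1 this.2

lemma LB.slice1 {g : ℝ × ℝ → ℝ} (hg : LB g) (y a b : ℝ) :
    IntervalIntegrable (fun x => g (x, y)) volume a b := by
  obtain ⟨M, hM⟩ := hg.2 (max (max |a| |b|) |y|)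
  rw [intervalIntegrable_iff]
  refine Measure.integrableOn_of_bounded (M := M) (by simp)
    (hg.1.comp (by fun_prop)).aestronglyMeasurable ?_
  refine (ae_restrict_iff' measurableSet_uIoc).2 (Eventually.of_forall ?_)
  intro x hx
  refine hM _ (le_max_of_le_left ?_) (le_max_right _ _)
  have := uIoc_subset_uIcc hx
  rcases le_total a b with h | h
  · rw [uIcc_of_le h] at this
    exact abs_le_max_abs_abs this.1 this.2
  · rw [uIcc_of_ge h] at this
    rw [max_comm]
    exact abs_le_max_abs_abs this.1 this.2

lemma LB.slice2 {g : ℝ × ℝ → ℝ} (hg : LB g) (x a b : ℝ) :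
    IntervalIntegrable (fun y => g (x, y)) volume a b := by
  have : LB (fun p => g (p.2, p.1)) := by
    refine ⟨hg.1.comp measurable_swap, fun r => ?_⟩
    obtain ⟨M, hM⟩ := hg.2 r
    exact ⟨M, fun p h1 h2 => hM _ h2 h1⟩
  exact this.slice1 x a b

lemma fubini1 {α β : ℝ} (hα : 0 < α) (hβ : 0 < β) {g : ℝ × ℝ → ℝ} (hg : LB g) :
    ∫ p in Stadium α β, g p =
      ∫ y in (-β)..β, ∫ x in (-(α + kf β y))..(α + kf β y), g (x, y) := by
  have hm := (Stadium_closed hα hβ).measurableSet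
  rw [← integral_indicator hm, Measure.volume_eq_prod, integral_prod_symm]
  · rw [intervalIntegral.integral_of_le (by linarith), ← integral_Icc_eq_integral_Ioc,
      ← integral_indicator measurableSet_Icc]
    congr 1
    ext y
    by_cases hy : y ∈ Icc (-β) β
    · rw [indicator_of_mem hy, intervalIntegral.integral_of_le (by linarith [kf_nonneg β y]),
        ← integral_Icc_eq_integral_Ioc, ← integral_indicator measurableSet_Icc]
      congr 1
      ext x
      by_cases hx : x ∈ Icc (-(α + kf β y)) (α + kf β y)
      · rw [indicator_of_mem hx, indicator_of_mem ((mem_Stadium1 hα hβ x y).2 ⟨hy, hx⟩)]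
      · rw [indicator_of_notMem hx,
          indicator_of_notMem (fun h => hx ((mem_Stadium1 hα hβ x y).1 h).2)]
    · rw [indicator_of_notMem hy]
      have : ∀ x, indicator (Stadium α β) g (x, y) = 0 := fun x =>
        indicator_of_notMem (fun h => hy ((mem_Stadium1 hα hβ x y).1 h).1) _
      simp [this]
  · rw [← Measure.volume_eq_prod, integrable_indicator_iff hm]
    exact hg.integrableOn hα hβ

lemma fubini2 {α β : ℝ} (hα : 0 < α) (hβ : 0 < β) {g : ℝ × ℝ → ℝ} (hg : LB g) :
    ∫ p in Stadium α β, g p =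
      ∫ x in (-(α + β))..(α + β), ∫ y in (-(hf α β x))..(hf α β x), g (x, y) := by
  have hm := (Stadium_closed hα hβ).measurableSet
  rw [← integral_indicator hm, Measure.volume_eq_prod, integral_prod]
  · rw [intervalIntegral.integral_of_le (by linarith), ← integral_Icc_eq_integral_Ioc,
      ← integral_indicator measurableSet_Icc]
    congr 1
    ext x
    by_cases hx : x ∈ Icc (-(α + β)) (α + β)
    · rw [indicator_of_mem hx, intervalIntegral.integral_of_le (by linarith [hf_nonneg α β x]),
        ← integral_Icc_eq_integral_Ioc, ← integral_indicator measurableSet_Icc]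
      congr 1
      ext y
      by_cases hy : y ∈ Icc (-(hf α β x)) (hf α β x)
      · rw [indicator_of_mem hy, indicator_of_mem ((mem_Stadium2 hα hβ x y).2 ⟨hx, hy⟩)]
      · rw [indicator_of_notMem hy,
          indicator_of_notMem (fun h => hy ((mem_Stadium2 hα hβ x y).1 h).2)]
    · rw [indicator_of_notMem hx]
      have : ∀ y, indicator (Stadium α β) g (x, y) = 0 := fun y =>
        indicator_of_notMem (fun h => hx ((mem_Stadium2 hα hβ x y).1 h).1) _
      simp [this]
  · rw [← Measure.volume_eq_prod, integrable_indicator_iff hm]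
    exact hg.integrableOn hα hβ

lemma greenX {α β : ℝ} (hα : 0 < α) (hβ : 0 < β) {F g : ℝ × ℝ → ℝ} (hg : LB g)
    (hF : Continuous F)
    (hd : ∀ x y, x ≠ α → x ≠ -α → HasDerivAt (fun t => F (t, y)) (g (x, y)) x) :
    ∫ p in Stadium α β, g p =
      ∫ y in (-β)..β, (F (α + kf β y, y) - F (-(α + kf β y), y)) := by
  rw [fubini1 hα hβ hg]
  congr 1
  ext y
  refine integral_eq_of_hasDerivAt_off_countable (fun t => F (t, y)) _
    (s := {α, -α}) (by simp) (by fun_prop) ?_ (hg.slice1 _ _ _)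
  intro x hx
  have h2 := hx.2
  simp only [mem_insert_iff, mem_singleton_iff, not_or] at h2
  exact hd x y h2.1 h2.2

lemma greenY {α β : ℝ} (hα : 0 < α) (hβ : 0 < β) {G g : ℝ × ℝ → ℝ} (hg : LB g)
    (hd : ∀ x y, HasDerivAt (fun t => G (x, t)) (g (x, y)) y) :
    ∫ p in Stadium α β, g p =
      ∫ x in (-(α + β))..(α + β), (G (x, hf α β x) - G (x, -(hf α β x))) := by
  rw [fubini2 hα hβ hg]
  congr 1
  ext x
  exact intervalIntegral.integral_eq_sub_of_hasDerivAt (fun y _ => hd x y) (hg.slice2 _ _ _)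

lemma trigX {α β : ℝ} (hβ : 0 < β) {F : ℝ × ℝ → ℝ} (hF : Continuous F) :
    ∫ y in (-β)..β, (F (α + kf β y, y) - F (-(α + kf β y), y)) =
      ∫ θ in (-(π / 2))..(π / 2), (β * cos θ) *
        (F (α + β * cos θ, β * sin θ) - F (-(α + β * cos θ), β * sin θ)) := by
  have hk := kf_cont β
  have h := intervalIntegral.integral_comp_mul_deriv (a := -(π/2)) (b := π/2)
    (f := fun θ => β * sin θ) (f' := fun θ => β * cos θ)
    (g := fun y => F (α + kf β y, y) - F (-(α + kf β y), y))
    (fun θ _ => (hasDerivAt_sin θ).const_mul β) (by fun_prop) (by fun_prop)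
  simp only [sin_neg, sin_pi_div_two, mul_neg, mul_one] at h
  rw [← h]
  refine intervalIntegral.integral_congr fun θ hθ => ?_
  rw [uIcc_of_le (by linarith [pi_pos])] at hθ
  have hc := cos_nonneg_of_mem_Icc hθ
  have : kf β (β * sin θ) = β * cos θ := by
    unfold kf
    rw [show β ^ 2 - (β * sin θ) ^ 2 = (β * cos θ) ^ 2 by nlinarith [sin_sq_add_cos_sq θ]]
    exact Real.sqrt_sq (by positivity)
  simp only [Function.comp, this]
  ring

lemma hf_trig {α β : ℝ} (hα : 0 < α) (hβ : 0 < β) {θ : ℝ} (h0 : 0 ≤ cos θ) (h1 : 0 ≤ sin θ) :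
    hf α β (α + β * cos θ) = β * sin θ ∧ hf α β (-(α + β * cos θ)) = β * sin θ := by
  have hp : 0 ≤ β * cos θ := by positivity
  have e1 : |α + β * cos θ| = α + β * cos θ := abs_of_nonneg (by linarith)
  have : wf α (α + β * cos θ) = β * cos θ := by
    unfold wf; rw [e1]; simp [hp]
  have h2 : wf α (-(α + β * cos θ)) = β * cos θ := by
    unfold wf; rw [abs_neg, e1]; simp [hp]
  unfold hf
  rw [this, h2, show β ^ 2 - (β * cos θ) ^ 2 = (β * sin θ) ^ 2 by
    nlinarith [sin_sq_add_cos_sq θ]]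
  have := Real.sqrt_sq (show 0 ≤ β * sin θ by positivity)
  exact ⟨this, this⟩

lemma trigY {α β : ℝ} (hα : 0 < α) (hβ : 0 < β) {G : ℝ × ℝ → ℝ} (hG : Continuous G) :
    ∫ x in (-(α + β))..(α + β), (G (x, hf α β x) - G (x, -(hf α β x))) =
      (∫ x in (-α)..α, (G (x, β) - G (x, -β))) +
      ∫ θ in (-(π / 2))..(π / 2), (β * sin θ) *
        (G (α + β * cos θ, β * sin θ) + G (-(α + β * cos θ), β * sin θ)) := by
  have hh := hf_cont α β
  set g : ℝ → ℝ := fun x => G (x, hf α β x) - G (x, -(hf α β x)) with hg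
  have hgc : Continuous g := by fun_prop
  have hi : ∀ a b, IntervalIntegrable g volume a b := fun a b => hgc.intervalIntegrable a b
  rw [← intervalIntegral.integral_add_adjacent_intervals (hi _ (-α)) (hi (-α) _),
    ← intervalIntegral.integral_add_adjacent_intervals (hi (-α) α) (hi α _)]
  have hmid : ∫ x in (-α)..α, g x = ∫ x in (-α)..α, (G (x, β) - G (x, -β)) := by
    refine intervalIntegral.integral_congr fun x hx => ?_
    rw [uIcc_of_le (by linarith)] at hx
    have hw : wf α x = 0 := by
      unfold wf
      exact max_eq_right (by linarith [abs_le.2 hx])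
    have : hf α β x = β := by unfold hf; rw [hw]; simp [hβ.le]
    simp only [hg, this]
  have hr : ∫ x in α..(α + β), g x = ∫ θ in (0)..(π / 2), g (α + β * cos θ) * (β * sin θ) := by
    have h := intervalIntegral.integral_comp_mul_deriv (a := 0) (b := π/2)
      (f := fun θ => α + β * cos θ) (f' := fun θ => β * (- sin θ)) (g := g)
      (fun θ _ => ((hasDerivAt_cos θ).const_mul β).const_add α) (by fun_prop) (by fun_prop)
    simp only [cos_zero, cos_pi_div_two, mul_zero, add_zero, mul_one] at h
    rw [intervalIntegral.integral_symm, ← h, ← intervalIntegral.integral_neg]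
    congr 1; ext θ; simp [Function.comp]
  have hl : ∫ x in (-(α + β))..(-α), g x
      = ∫ θ in (0)..(π / 2), g (-(α + β * cos θ)) * (β * sin θ) := by
    have h := intervalIntegral.integral_comp_mul_deriv (a := 0) (b := π/2)
      (f := fun θ => -(α + β * cos θ)) (f' := fun θ => -(β * (- sin θ))) (g := g)
      (fun θ _ => (((hasDerivAt_cos θ).const_mul β).const_add α).neg) (by fun_prop) (by fun_prop)
    simp only [cos_zero, cos_pi_div_two, mul_zero, add_zero, mul_one] at h
    rw [← h]
    congr 1; ext θ; simp [Function.comp]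
  set q : ℝ → ℝ := fun θ => (β * sin θ) *
        (G (α + β * cos θ, β * sin θ) + G (-(α + β * cos θ), β * sin θ)) with hq
  have hqc : Continuous q := by fun_prop
  have hqi : ∀ a b, IntervalIntegrable q volume a b := fun a b => hqc.intervalIntegrable a b
  rw [← intervalIntegral.integral_add_adjacent_intervals (hqi (-(π/2)) 0) (hqi 0 (π/2))]
  have hneg : ∫ θ in (-(π/2))..0, q θ = ∫ θ in (0)..(π/2), q (-θ) := by
    rw [intervalIntegral.integral_comp_neg]; simp
  rw [hneg, hmid, hr, hl, add_comm, add_assoc]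
  congr 1
  rw [← intervalIntegral.integral_add, ← intervalIntegral.integral_add]
  · refine intervalIntegral.integral_congr fun θ hθ => ?_
    rw [uIcc_of_le (by linarith [pi_pos])] at hθ
    have hc := cos_nonneg_of_mem_Icc (x := θ) ⟨by linarith [hθ.1, pi_pos], hθ.2⟩
    have hs := sin_nonneg_of_nonneg_of_le_pi hθ.1 (by linarith [hθ.2, pi_pos])
    obtain ⟨e1, e2⟩ := hf_trig hα hβ hc hs
    simp only [hg, hq, e1, e2, sin_neg, cos_neg, mul_neg]
    ring
  · exact (hqc.comp continuous_neg).intervalIntegrable _ _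
  · exact hqi _ _
  · exact Continuous.intervalIntegrable (by fun_prop) _ _
  · exact Continuous.intervalIntegrable (by fun_prop) _ _

/-! ### Integral inequalities -/

structure Jet (u ux uy uxx uxy uyy t : ℝ × ℝ → ℝ) : Prop where
  cu : Continuous u
  cux : Continuous ux
  cuy : Continuous uy
  cuxx : Continuous uxx
  cuxy : Continuous uxy
  cuyy : Continuous uyy
  ct : Continuous t
  u_x : ∀ x y, HasDerivAt (fun s => u (s, y)) (ux (x, y)) x
  u_y : ∀ x y, HasDerivAt (fun s => u (x, s)) (uy (x, y)) y
  ux_x : ∀ x y, HasDerivAt (fun s => ux (s, y)) (uxx (x, y)) x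
  ux_y : ∀ x y, HasDerivAt (fun s => ux (x, s)) (uxy (x, y)) y
  uy_x : ∀ x y, HasDerivAt (fun s => uy (s, y)) (uxy (x, y)) x
  uy_y : ∀ x y, HasDerivAt (fun s => uy (x, s)) (uyy (x, y)) y
  uyy_x : ∀ x y, HasDerivAt (fun s => uyy (s, y)) (t (x, y)) x
  uxy_y : ∀ x y, HasDerivAt (fun s => uxy (x, s)) (t (x, y)) y
  u_c : ∀ (c d : ℝ → ℝ) (c' d' θ : ℝ), HasDerivAt c c' θ → HasDerivAt d d' θ →
    HasDerivAt (fun s => u (c s, d s)) (ux (c θ, d θ) * c' + uy (c θ, d θ) * d') θ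
  ux_c : ∀ (c d : ℝ → ℝ) (c' d' θ : ℝ), HasDerivAt c c' θ → HasDerivAt d d' θ →
    HasDerivAt (fun s => ux (c s, d s)) (uxx (c θ, d θ) * c' + uxy (c θ, d θ) * d') θ
  uy_c : ∀ (c d : ℝ → ℝ) (c' d' θ : ℝ), HasDerivAt c c' θ → HasDerivAt d d' θ →
    HasDerivAt (fun s => uy (c s, d s)) (uxy (c θ, d θ) * c' + uyy (c θ, d θ) * d') θ

lemma zero_deriv {g : ℝ → ℝ} {g' a b x : ℝ} (hab : a < b) (hx : x ∈ Icc a b)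
    (hg : HasDerivAt g g' x) (h0 : ∀ t ∈ Icc a b, g t = 0) : g' = 0 := by
  have h1 : HasDerivWithinAt g 0 (Icc a b) x :=
    (hasDerivWithinAt_const x (Icc a b) (0 : ℝ)).congr h0 (h0 x hx)
  exact (uniqueDiffOn_Icc hab x hx).eq_deriv _ hg.hasDerivWithinAt h1

lemma wronski {P Q P' Q' : ℝ → ℝ} (hP : ∀ θ, HasDerivAt P (P' θ) θ)
    (hQ : ∀ θ, HasDerivAt Q (Q' θ) θ) (cP : Continuous P') (cQ : Continuous Q')
    (h : ∀ θ ∈ Icc (-(π / 2)) (π / 2), -sin θ * P θ + cos θ * Q θ = 0) :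
    0 ≤ ∫ θ in (-(π / 2))..(π / 2), P θ * Q' θ := by
  have cP0 : Continuous P := continuous_iff_continuousAt.2 fun θ => (hP θ).continuousAt
  have cQ0 : Continuous Q := continuous_iff_continuousAt.2 fun θ => (hQ θ).continuousAt
  have hpi : -(π / 2) < π / 2 := by linarith [pi_pos]
  have hftc : ∫ θ in (-(π / 2))..(π / 2), (P' θ * Q θ + P θ * Q' θ) = 0 := by
    have := intervalIntegral.integral_eq_sub_of_hasDerivAt (a := -(π / 2)) (b := π / 2)
      (f := fun θ => P θ * Q θ)
      (f' := fun θ => P' θ * Q θ + P θ * Q' θ) (fun θ _ => (hP θ).mul (hQ θ))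
      (Continuous.intervalIntegrable (by fun_prop) _ _)
    rw [this]
    have h1 := h (π / 2) ⟨hpi.le, le_rfl⟩
    have h2 := h (-(π / 2)) ⟨le_rfl, hpi.le⟩
    simp at h1 h2
    rw [h1, h2]; simp
  have key : ∀ θ ∈ Icc (-(π / 2)) (π / 2), 0 ≤ 2 * (P θ * Q' θ) - (P' θ * Q θ + P θ * Q' θ) := by
    intro θ hθ
    have hd : HasDerivAt (fun θ => -sin θ * P θ + cos θ * Q θ)
      ((-cos θ) * P θ + (-sin θ) * P' θ + ((-sin θ) * Q θ + cos θ * Q' θ)) θ :=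
      ((hasDerivAt_sin θ).neg.mul (hP θ)).add ((hasDerivAt_cos θ).mul (hQ θ))
    have h1 := zero_deriv hpi hθ hd h
    have h0 := h θ hθ
    have hsc := sin_sq_add_cos_sq θ
    set v := cos θ * P θ + sin θ * Q θ with hv
    have e1 : P θ = v * cos θ := by
      rw [hv]; linear_combination -(P θ) * hsc - sin θ * h0
    have e2 : Q θ = v * sin θ := by
      rw [hv]; linear_combination -(Q θ) * hsc + cos θ * h0
    have : 2 * (P θ * Q' θ) - (P' θ * Q θ + P θ * Q' θ) = v ^ 2 := by
      have : v = cos θ * Q' θ - sin θ * P' θ := by rw [hv]; linear_combination -h1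
      calc 2 * (P θ * Q' θ) - (P' θ * Q θ + P θ * Q' θ) = P θ * Q' θ - P' θ * Q θ := by ring
        _ = v * (cos θ * Q' θ - sin θ * P' θ) := by rw [e1, e2]; ring
        _ = v ^ 2 := by rw [← this]; ring
    rw [this]; positivity
  have hn := intervalIntegral.integral_nonneg (μ := volume) hpi.le key
  rw [intervalIntegral.integral_sub (Continuous.intervalIntegrable (by fun_prop) _ _)
    (Continuous.intervalIntegrable (by fun_prop) _ _), hftc,
    intervalIntegral.integral_const_mul] at hn
  linarith

section bd
variable {α β : ℝ} {u ux uy uxx uxy uyy t : ℝ × ℝ → ℝ}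

lemma bd_curve (hα : 0 < α) (hβ : 0 < β) {θ : ℝ} (hθ : θ ∈ Icc (-(π / 2)) (π / 2)) :
    (α + β * cos θ, β * sin θ) ∈ StadiumBoundary α β ∧
    (-(α + β * cos θ), β * sin θ) ∈ StadiumBoundary α β := by
  have hc := cos_nonneg_of_mem_Icc hθ
  have hp : 0 ≤ β * cos θ := by positivity
  have e1 : |α + β * cos θ| = α + β * cos θ := abs_of_nonneg (by linarith)
  have e2 : (α + β * cos θ - α) ^ 2 + (β * sin θ) ^ 2 = β ^ 2 := by
    linear_combination β ^ 2 * sin_sq_add_cos_sq θ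
  constructor
  · right
    refine ⟨?_, ?_⟩
    · show (|α + β * cos θ| - α) ^ 2 + (β * sin θ) ^ 2 = β ^ 2
      rw [e1]; exact e2
    · show α ≤ |α + β * cos θ|
      rw [e1]; linarith
  · right
    refine ⟨?_, ?_⟩
    · show (|-(α + β * cos θ)| - α) ^ 2 + (β * sin θ) ^ 2 = β ^ 2
      rw [abs_neg, e1]; exact e2
    · show α ≤ |-(α + β * cos θ)|
      rw [abs_neg, e1]; linarith

lemma bd_flat {x : ℝ} (hx : x ∈ Icc (-α) α) :
    (x, β) ∈ StadiumBoundary α β ∧ (x, -β) ∈ StadiumBoundary α β :=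
  ⟨Or.inl ⟨abs_le.2 hx, Or.inl rfl⟩, Or.inl ⟨abs_le.2 hx, Or.inr rfl⟩⟩

lemma bd_k (hα : 0 < α) (_hβ : 0 < β) {y : ℝ} (hy : y ∈ Icc (-β) β) :
    (α + kf β y, y) ∈ StadiumBoundary α β ∧ (-(α + kf β y), y) ∈ StadiumBoundary α β := by
  have hk := kf_nonneg β y
  have e1 : |α + kf β y| = α + kf β y := abs_of_nonneg (by linarith)
  have e2 := kf_sq hy.1 hy.2
  constructor
  · right
    refine ⟨?_, ?_⟩
    · show (|α + kf β y| - α) ^ 2 + y ^ 2 = β ^ 2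
      rw [e1]; linear_combination e2
    · show α ≤ |α + kf β y|
      rw [e1]; linarith
  · right
    refine ⟨?_, ?_⟩
    · show (|-(α + kf β y)| - α) ^ 2 + y ^ 2 = β ^ 2
      rw [abs_neg, e1]; linear_combination e2
    · show α ≤ |-(α + kf β y)|
      rw [abs_neg, e1]; linarith

lemma bd_h (_hα : 0 < α) (hβ : 0 < β) {x : ℝ} (hx : x ∈ Icc (-(α + β)) (α + β)) :
    (x, hf α β x) ∈ StadiumBoundary α β ∧ (x, -(hf α β x)) ∈ StadiumBoundary α β := by
  have e2 := hf_sq hβ (abs_le.2 hx)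
  by_cases h : |x| ≤ α
  · have hw : wf α x = 0 := by
      unfold wf
      exact max_eq_right (by linarith)
    have : hf α β x = β := by unfold hf; rw [hw]; simp [hβ.le]
    rw [this]
    exact bd_flat (abs_le.1 h)
  · push Not at h
    have hw : wf α x = |x| - α := by
      unfold wf
      exact max_eq_left (by linarith)
    rw [hw] at e2
    constructor
    · right
      exact ⟨show (|x| - α) ^ 2 + (hf α β x) ^ 2 = β ^ 2 by linarith, h.le⟩
    · right
      exact ⟨show (|x| - α) ^ 2 + (-(hf α β x)) ^ 2 = β ^ 2 by linarith [neg_sq (hf α β x)], h.le⟩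

lemma curve_tan (hα : 0 < α) (hβ : 0 < β) (J : Jet u ux uy uxx uxy uyy t)
    (hb : ∀ p ∈ StadiumBoundary α β, u p = 0) {θ : ℝ} (hθ : θ ∈ Icc (-(π / 2)) (π / 2)) :
    -sin θ * ux (α + β * cos θ, β * sin θ) + cos θ * uy (α + β * cos θ, β * sin θ) = 0 ∧
    sin θ * ux (-(α + β * cos θ), β * sin θ) + cos θ * uy (-(α + β * cos θ), β * sin θ) = 0 := by
  have hpi : -(π / 2) < π / 2 := by linarith [pi_pos]
  have c1 : HasDerivAt (fun θ => α + β * cos θ) (β * (- sin θ)) θ :=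
    ((hasDerivAt_cos θ).const_mul β).const_add α
  have c2 : HasDerivAt (fun θ => β * sin θ) (β * cos θ) θ := (hasDerivAt_sin θ).const_mul β
  have h1 := zero_deriv hpi hθ (J.u_c _ _ _ _ θ c1 c2) (fun s hs => hb _ (bd_curve hα hβ hs).1)
  have h2 := zero_deriv hpi hθ (J.u_c _ _ _ _ θ c1.neg c2)
    (fun s hs => hb _ (bd_curve hα hβ hs).2)
  constructor
  · apply mul_left_cancel₀ hβ.ne'
    linear_combination h1
  · apply mul_left_cancel₀ hβ.ne'
    simp only [Pi.neg_apply] at h2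
    linear_combination h2

lemma flat_tan (hα : 0 < α) (J : Jet u ux uy uxx uxy uyy t)
    (hb : ∀ p ∈ StadiumBoundary α β, u p = 0) {x : ℝ} (hx : x ∈ Icc (-α) α) :
    ux (x, β) = 0 ∧ ux (x, -β) = 0 :=
  ⟨zero_deriv (by linarith) hx (J.u_x x β) (fun s hs => hb _ (bd_flat hs).1),
   zero_deriv (by linarith) hx (J.u_x x (-β)) (fun s hs => hb _ (bd_flat hs).2)⟩

/-- Poincare-type identity -/
lemma relP (hα : 0 < α) (hβ : 0 < β) (J : Jet u ux uy uxx uxy uyy t)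
    (hb : ∀ p ∈ StadiumBoundary α β, u p = 0) :
    ∫ p in Stadium α β, (u p ^ 2 + 2 * p.1 * u p * ux p) = 0 := by
  have := J.cu; have := J.cux
  rw [greenX hα hβ (F := fun p => p.1 * u p ^ 2) (LB.of_cont (by fun_prop)) (by fun_prop)]
  · rw [intervalIntegral.integral_congr (g := fun _ => (0 : ℝ))]
    · simp
    · intro y hy
      rw [uIcc_of_le (by linarith)] at hy
      simp only [hb _ (bd_k hα hβ hy).1, hb _ (bd_k hα hβ hy).2]
      ring
  · intro x y _ _
    exact ((hasDerivAt_id' x).fun_mul ((J.u_x x y).fun_pow 2)).congr_deriv (by norm_num; ring)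

lemma relQ1 (hα : 0 < α) (hβ : 0 < β) (J : Jet u ux uy uxx uxy uyy t)
    (hb : ∀ p ∈ StadiumBoundary α β, u p = 0) :
    ∫ p in Stadium α β, (sf α p.1 ^ 2 * (uy p ^ 2 + u p * uyy p)) = 0 := by
  have := J.cu; have := J.cuy; have := J.cuyy
  rw [greenY hα hβ (G := fun p => sf α p.1 ^ 2 * (u p * uy p))
    ((LB.sf α).pow2.mul (LB.of_cont (by fun_prop)))]
  · rw [intervalIntegral.integral_congr (g := fun _ => (0 : ℝ))]
    · simp
    · intro y hy
      rw [uIcc_of_le (by linarith)] at hy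
      simp [hb _ (bd_h hα hβ hy).1, hb _ (bd_h hα hβ hy).2]
  · intro x y
    exact (((J.u_y x y).fun_mul (J.uy_y x y)).const_mul (sf α x ^ 2)).congr_deriv (by ring)

lemma relQ2 (hα : 0 < α) (hβ : 0 < β) (J : Jet u ux uy uxx uxy uyy t)
    (hb : ∀ p ∈ StadiumBoundary α β, u p = 0) :
    ∫ p in Stadium α β, (sf α p.1 * (u p * ux p) + wf α p.1 * (ux p ^ 2 + u p * uxx p)) = 0 := by
  have := J.cu; have := J.cux; have := J.cuxx; have := wf_cont α
  rw [greenX hα hβ (F := fun p => wf α p.1 * (u p * ux p))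
    (((LB.sf α).mul (LB.of_cont (by fun_prop))).add (LB.of_cont (by fun_prop))) (by fun_prop)]
  · rw [intervalIntegral.integral_congr (g := fun _ => (0 : ℝ))]
    · simp
    · intro y hy
      rw [uIcc_of_le (by linarith)] at hy
      simp only [hb _ (bd_k hα hβ hy).1, hb _ (bd_k hα hβ hy).2]
      ring
  · intro x y h1 h2
    exact ((wf_hasDeriv hα h1 h2).fun_mul ((J.u_x x y).fun_mul (J.ux_x x y))).congr_deriv (by ring)

lemma green (hα : 0 < α) (hβ : 0 < β) {F G g g' : ℝ × ℝ → ℝ} (hg : LB g) (hg' : LB g')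
    (hF : Continuous F) (hG : Continuous G)
    (hd : ∀ x y, x ≠ α → x ≠ -α → HasDerivAt (fun t => F (t, y)) (g (x, y)) x)
    (hd' : ∀ x y, HasDerivAt (fun t => G (x, t)) (g' (x, y)) y)
    (hfl : ∀ x ∈ Icc (-α) α, G (x, β) = 0 ∧ G (x, -β) = 0) :
    ∫ p in Stadium α β, (g p + g' p) =
     (∫ θ in (-(π / 2))..(π / 2), β *
       (cos θ * F (α + β * cos θ, β * sin θ) + sin θ * G (α + β * cos θ, β * sin θ))) +
     (∫ θ in (-(π / 2))..(π / 2), β *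
       (-cos θ * F (-(α + β * cos θ), β * sin θ) + sin θ * G (-(α + β * cos θ), β * sin θ))) := by
  rw [integral_add (hg.integrableOn hα hβ) (hg'.integrableOn hα hβ), greenX hα hβ hg hF hd,
    greenY hα hβ hg' hd', trigX hβ hF, trigY hα hβ hG]
  have : ∫ x in (-α)..α, (G (x, β) - G (x, -β)) = 0 := by
    rw [intervalIntegral.integral_congr (g := fun _ => (0 : ℝ))]
    · simp
    · intro y hy
      rw [uIcc_of_le (by linarith)] at hy
      simp [hfl y hy]
  rw [this, zero_add, ← intervalIntegral.integral_add, ← intervalIntegral.integral_add]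
  · congr 1
    ext θ
    ring
  all_goals exact Continuous.intervalIntegrable (by fun_prop) _ _

lemma relH (hα : 0 < α) (hβ : 0 < β) (J : Jet u ux uy uxx uxy uyy t)
    (hb : ∀ p ∈ StadiumBoundary α β, u p = 0) :
    0 ≤ ∫ p in Stadium α β, (uxx p * uyy p - uxy p ^ 2) := by
  have := J.cu; have := J.cux; have := J.cuxx; have := J.cuxy; have := J.cuyy; have := J.ct
  have hG := green hα hβ (F := fun p => ux p * uyy p) (G := fun p => -(ux p * uxy p))
    (g := fun p => uxx p * uyy p + ux p * t p) (g' := fun p => -(uxy p * uxy p + ux p * t p))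
    (LB.of_cont (by fun_prop)) (LB.of_cont (by fun_prop)) (by fun_prop) (by fun_prop)
    (fun x y _ _ => (J.ux_x x y).mul (J.uyy_x x y))
    (fun x y => ((J.ux_y x y).mul (J.uxy_y x y)).neg)
    (fun x hx => by simp [flat_tan hα J hb hx])
  have e : ∀ p, uxx p * uyy p - uxy p ^ 2 =
    uxx p * uyy p + ux p * t p + -(uxy p * uxy p + ux p * t p) := fun p => by ring
  simp only [e]
  rw [hG]
  have c1 : ∀ θ, HasDerivAt (fun θ => α + β * cos θ) (β * (- sin θ)) θ := fun θ =>
    ((hasDerivAt_cos θ).const_mul β).const_add α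
  have c2 : ∀ θ, HasDerivAt (fun θ => β * sin θ) (β * cos θ) θ :=
    fun θ => (hasDerivAt_sin θ).const_mul β
  have w1 := wronski (fun θ => J.ux_c _ _ _ _ θ (c1 θ) (c2 θ))
    (fun θ => J.uy_c _ _ _ _ θ (c1 θ) (c2 θ)) (by fun_prop) (by fun_prop)
    (fun θ hθ => (curve_tan hα hβ J hb hθ).1)
  have w2 := wronski (fun θ => (J.ux_c _ _ _ _ θ (c1 θ).fun_neg (c2 θ)).fun_neg)
    (fun θ => J.uy_c _ _ _ _ θ (c1 θ).fun_neg (c2 θ)) (by fun_prop) (by fun_prop)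
    (fun θ hθ => by linarith [(curve_tan hα hβ J hb hθ).2])
  refine add_nonneg (w1.trans_eq ?_) (w2.trans_eq ?_)
  · congr 1; ext θ; ring
  · congr 1; ext θ; ring

end bd
/-! ### The multiplier -/

def af (α β : ℝ) (p : ℝ × ℝ) : ℝ := p.1 * (1 - wf α p.1 ^ 2 / β ^ 2)
def bf (α β : ℝ) (p : ℝ × ℝ) : ℝ := -((wf α p.1 + α) * wf α p.1 * p.2) / β ^ 2
def a0f (α β : ℝ) (p : ℝ × ℝ) : ℝ := 1 - wf α p.1 ^ 2 / β ^ 2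
def a1f (α β : ℝ) (p : ℝ × ℝ) : ℝ := -(2 * p.1 * wf α p.1) / β ^ 2
def b1f (α β : ℝ) (p : ℝ × ℝ) : ℝ := -((2 * wf α p.1 + α) * p.2) / β ^ 2
def byf (α β : ℝ) (p : ℝ × ℝ) : ℝ := -((wf α p.1 + α) * wf α p.1) / β ^ 2

lemma af_c (α β : ℝ) : Continuous (af α β) := by have := wf_cont α; unfold af; fun_prop
lemma bf_c (α β : ℝ) : Continuous (bf α β) := by have := wf_cont α; unfold bf; fun_prop
lemma a0f_c (α β : ℝ) : Continuous (a0f α β) := by have := wf_cont α; unfold a0f; fun_prop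
lemma a1f_c (α β : ℝ) : Continuous (a1f α β) := by have := wf_cont α; unfold a1f; fun_prop
lemma b1f_c (α β : ℝ) : Continuous (b1f α β) := by have := wf_cont α; unfold b1f; fun_prop
lemma byf_c (α β : ℝ) : Continuous (byf α β) := by have := wf_cont α; unfold byf; fun_prop

lemma af_x {α β : ℝ} (hα : 0 < α) {x : ℝ} (y : ℝ) (h1 : x ≠ α) (h2 : x ≠ -α) :
    HasDerivAt (fun t => af α β (t, y)) (a0f α β (x, y) + sf α x * a1f α β (x, y)) x := by
  unfold af a0f a1f
  have hw := wf_hasDeriv hα h1 h2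
  exact ((hasDerivAt_id' x).fun_mul (((hw.fun_pow 2).div_const (β ^ 2)).const_sub 1)).congr_deriv
    (by simp only [show (2 : ℕ) - 1 = 1 from rfl, pow_one]; push_cast; ring)

lemma bf_x {α β : ℝ} (hα : 0 < α) {x : ℝ} (y : ℝ) (h1 : x ≠ α) (h2 : x ≠ -α) :
    HasDerivAt (fun t => bf α β (t, y)) (sf α x * b1f α β (x, y)) x := by
  unfold bf b1f
  have hw := wf_hasDeriv hα h1 h2
  exact ((((hw.add_const α).fun_mul hw).mul_const y).fun_neg.div_const (β ^ 2)).congr_deriv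
    (by ring)

lemma bf_y {α β : ℝ} (x y : ℝ) :
    HasDerivAt (fun t => bf α β (x, t)) (byf α β (x, y)) y := by
  unfold bf byf
  exact (((hasDerivAt_id' y).const_mul ((wf α x + α) * wf α x)).fun_neg.div_const
    (β ^ 2)).congr_deriv (by ring)

lemma coef_curve {α β : ℝ} (hα : 0 < α) (hβ : 0 < β) {θ : ℝ} (h0 : 0 ≤ cos θ) :
    af α β (α + β * cos θ, β * sin θ) = (α + β * cos θ) * sin θ ^ 2 ∧
    bf α β (α + β * cos θ, β * sin θ) = -(α + β * cos θ) * cos θ * sin θ ∧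
    af α β (-(α + β * cos θ), β * sin θ) = -(α + β * cos θ) * sin θ ^ 2 ∧
    bf α β (-(α + β * cos θ), β * sin θ) = -(α + β * cos θ) * cos θ * sin θ := by
  have hp : 0 ≤ β * cos θ := by positivity
  have e1 : |α + β * cos θ| = α + β * cos θ := abs_of_nonneg (by linarith)
  have e2 : wf α (α + β * cos θ) = β * cos θ := by
    unfold wf; rw [e1]; simp [hp]
  have e3 : wf α (-(α + β * cos θ)) = β * cos θ := by
    unfold wf; rw [abs_neg, e1]; simp [hp]
  have hs : sin θ ^ 2 = 1 - cos θ ^ 2 := by linarith [sin_sq_add_cos_sq θ]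
  unfold af bf
  simp only [e2, e3, hs]
  refine ⟨?_, ?_, ?_, ?_⟩ <;> field_simp <;> ring

section mult
variable {α β : ℝ} {u ux uy uxx uxy uyy t : ℝ × ℝ → ℝ}

lemma relM (hα : 0 < α) (hβ : 0 < β) (J : Jet u ux uy uxx uxy uyy t)
    (hb : ∀ p ∈ StadiumBoundary α β, u p = 0) (l : ℝ) :
    LB (fun p => ((uxx p * (af α β p * ux p + bf α β p * uy p + 1 / 2 * u p) +
        ux p * (a0f α β p * ux p + af α β p * uxx p + bf α β p * uxy p + 1 / 2 * ux p)
        - 1 / 2 * (a0f α β p * (ux p ^ 2 + uy p ^ 2 - l * u p ^ 2) +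
          af α β p * (2 * ux p * uxx p + 2 * uy p * uxy p - l * (2 * u p * ux p)))) +
      sf α p.1 * (ux p * (a1f α β p * ux p + b1f α β p * uy p)
        - 1 / 2 * a1f α β p * (ux p ^ 2 + uy p ^ 2 - l * u p ^ 2))) +
      (uyy p * (af α β p * ux p + bf α β p * uy p + 1 / 2 * u p) +
        uy p * (af α β p * uxy p + byf α β p * uy p + bf α β p * uyy p + 1 / 2 * uy p)
        - 1 / 2 * (byf α β p * (ux p ^ 2 + uy p ^ 2 - l * u p ^ 2) +
          bf α β p * (2 * ux p * uxy p + 2 * uy p * uyy p - l * (2 * u p * uy p))))) ∧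
    ∫ p in Stadium α β,
      (((uxx p * (af α β p * ux p + bf α β p * uy p + 1 / 2 * u p) +
        ux p * (a0f α β p * ux p + af α β p * uxx p + bf α β p * uxy p + 1 / 2 * ux p)
        - 1 / 2 * (a0f α β p * (ux p ^ 2 + uy p ^ 2 - l * u p ^ 2) +
          af α β p * (2 * ux p * uxx p + 2 * uy p * uxy p - l * (2 * u p * ux p)))) +
      sf α p.1 * (ux p * (a1f α β p * ux p + b1f α β p * uy p)
        - 1 / 2 * a1f α β p * (ux p ^ 2 + uy p ^ 2 - l * u p ^ 2))) +
      (uyy p * (af α β p * ux p + bf α β p * uy p + 1 / 2 * u p) +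
        uy p * (af α β p * uxy p + byf α β p * uy p + bf α β p * uyy p + 1 / 2 * uy p)
        - 1 / 2 * (byf α β p * (ux p ^ 2 + uy p ^ 2 - l * u p ^ 2) +
          bf α β p * (2 * ux p * uxy p + 2 * uy p * uyy p - l * (2 * u p * uy p))))) = 0 := by
  have := J.cu; have := J.cux; have := J.cuy; have := J.cuxx; have := J.cuxy; have := J.cuyy
  have := af_c α β; have := bf_c α β; have := a0f_c α β; have := a1f_c α β
  have := b1f_c α β; have := byf_c α β
  have L1 : LB (fun p => (uxx p * (af α β p * ux p + bf α β p * uy p + 1 / 2 * u p) +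
        ux p * (a0f α β p * ux p + af α β p * uxx p + bf α β p * uxy p + 1 / 2 * ux p)
        - 1 / 2 * (a0f α β p * (ux p ^ 2 + uy p ^ 2 - l * u p ^ 2) +
          af α β p * (2 * ux p * uxx p + 2 * uy p * uxy p - l * (2 * u p * ux p)))) +
      sf α p.1 * (ux p * (a1f α β p * ux p + b1f α β p * uy p)
        - 1 / 2 * a1f α β p * (ux p ^ 2 + uy p ^ 2 - l * u p ^ 2))) :=
    (LB.of_cont (by fun_prop)).add ((LB.sf α).mul (LB.of_cont (by fun_prop)))
  have L2 : LB (fun p => (uyy p * (af α β p * ux p + bf α β p * uy p + 1 / 2 * u p) +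
        uy p * (af α β p * uxy p + byf α β p * uy p + bf α β p * uyy p + 1 / 2 * uy p)
        - 1 / 2 * (byf α β p * (ux p ^ 2 + uy p ^ 2 - l * u p ^ 2) +
          bf α β p * (2 * ux p * uxy p + 2 * uy p * uyy p - l * (2 * u p * uy p))))) :=
    LB.of_cont (by fun_prop)
  refine ⟨L1.add L2, ?_⟩
  rw [green hα hβ L1 L2
    (F := fun p => ux p * (af α β p * ux p + bf α β p * uy p + 1 / 2 * u p)
      - 1 / 2 * (af α β p * (ux p ^ 2 + uy p ^ 2 - l * u p ^ 2)))
    (G := fun p => uy p * (af α β p * ux p + bf α β p * uy p + 1 / 2 * u p)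
      - 1 / 2 * (bf α β p * (ux p ^ 2 + uy p ^ 2 - l * u p ^ 2)))
    (by fun_prop) (by fun_prop)]
  · have i0 : ∀ q : ℝ → ℝ, (∀ θ ∈ Icc (-(π / 2)) (π / 2), q θ = 0) →
        ∫ θ in (-(π / 2))..(π / 2), q θ = 0 := by
      intro q hq
      rw [intervalIntegral.integral_congr (g := fun _ => (0 : ℝ))]
      · simp
      · intro θ hθ
        rw [uIcc_of_le (by linarith [pi_pos])] at hθ
        exact hq θ hθ
    rw [i0 _ ?_, i0 _ ?_, add_zero]
    · intro θ hθ
      obtain ⟨_, _, e3, e4⟩ := coef_curve hα hβ (cos_nonneg_of_mem_Icc hθ)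
      have h1 := (curve_tan hα hβ J hb hθ).2
      have h2 := hb _ (bd_curve hα hβ hθ).2
      simp only [e3, e4, h2]
      linear_combination (β * (-(α + β * cos θ) * sin θ) *
        (-cos θ * ux (-(α + β * cos θ), β * sin θ) +
          sin θ * uy (-(α + β * cos θ), β * sin θ))) * h1
    · intro θ hθ
      obtain ⟨e1, e2, _, _⟩ := coef_curve hα hβ (cos_nonneg_of_mem_Icc hθ)
      have h1 := (curve_tan hα hβ J hb hθ).1
      have h2 := hb _ (bd_curve hα hβ hθ).1
      simp only [e1, e2, h2]
      linear_combination (-β * ((α + β * cos θ) * sin θ) *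
        (cos θ * ux (α + β * cos θ, β * sin θ) +
          sin θ * uy (α + β * cos θ, β * sin θ))) * h1
  · intro x y h1 h2
    have ha := af_x (β := β) hα y h1 h2
    have hb' := bf_x (β := β) hα y h1 h2
    have e := (((J.ux_x x y).fun_pow 2).fun_add ((J.uy_x x y).fun_pow 2)).fun_sub
      (((J.u_x x y).fun_pow 2).const_mul l)
    have z := ((ha.fun_mul (J.ux_x x y)).fun_add (hb'.fun_mul (J.uy_x x y))).fun_add
      ((J.u_x x y).const_mul (1 / 2))
    exact (((J.ux_x x y).fun_mul z).fun_sub ((ha.fun_mul e).const_mul (1 / 2))).congr_deriv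
      (by simp only [show (2 : ℕ) - 1 = 1 from rfl, pow_one]; push_cast; ring)
  · intro x y
    have ha : HasDerivAt (fun s => af α β (x, s)) 0 y := by
      exact hasDerivAt_const y (x * (1 - wf α x ^ 2 / β ^ 2))
    have hb' := bf_y (α := α) (β := β) x y
    have e := (((J.ux_y x y).fun_pow 2).fun_add ((J.uy_y x y).fun_pow 2)).fun_sub
      (((J.u_y x y).fun_pow 2).const_mul l)
    have z := ((ha.fun_mul (J.ux_y x y)).fun_add (hb'.fun_mul (J.uy_y x y))).fun_add
      ((J.u_y x y).const_mul (1 / 2))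
    exact (((J.uy_y x y).fun_mul z).fun_sub ((hb'.fun_mul e).const_mul (1 / 2))).congr_deriv
      (by simp only [show (2 : ℕ) - 1 = 1 from rfl, pow_one]; push_cast; ring)
  · intro x hx
    have hw : wf α x = 0 := by
      unfold wf
      exact max_eq_right (by linarith [abs_le.2 hx])
    have hz : ∀ y, bf α β (x, y) = 0 := fun y => by unfold bf; simp [hw]
    obtain ⟨f1, f2⟩ := flat_tan hα J hb hx
    simp [hz, f1, f2, hb _ (bd_flat hx).1, hb _ (bd_flat hx).2]

end mult

lemma algM {L K1 K2 β μ a b p q r s w f u ux uy l : ℝ} (hK1 : 0 ≤ K1) (hμ : 0 < μ)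
    (hl : 0 ≤ l) (hs : s ^ 4 = s ^ 2) (hw : w ≤ β * s ^ 2)
    (ha : a ^ 2 ≤ L ^ 2) (hb : b ^ 2 ≤ L ^ 2 * s ^ 2) (hbs : b * s ^ 2 = b)
    (hp : 0 ≤ p) (hp' : p ≤ K1 * w) (hq : 0 ≤ q) (hq' : q ≤ K1 * w)
    (hr : r ^ 2 ≤ K2 ^ 2) :
    f * (a * ux + b * uy + 1 / 2 * u) + p * ux ^ 2 - s * r * ux * uy + q * uy ^ 2
      - 1 / 2 * (p + q) * (ux ^ 2 + uy ^ 2 - l * u ^ 2) ≤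
    1 / 4 * ux ^ 2 + (3 * L ^ 2 + 1 / (16 * μ)) * f ^ 2 + μ * u ^ 2 +
      (K1 * β + 2 * K2 ^ 2 + 1) * (s ^ 2 * uy ^ 2) + K1 * (w * ux ^ 2) +
      (K1 * β * l) * (s ^ 2 * u ^ 2) := by
  have h1 : f * a * ux ≤ 1 / 8 * ux ^ 2 + 2 * L ^ 2 * f ^ 2 := by
    nlinarith [sq_nonneg (ux - 4 * f * a), mul_nonneg (sub_nonneg.2 ha) (sq_nonneg f)]
  have h2 : f * b * uy ≤ L ^ 2 * f ^ 2 + s ^ 2 * uy ^ 2 := by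
    have hs0 : 0 ≤ s ^ 2 := sq_nonneg s
    have hs1 : s ^ 2 ≤ 1 := by nlinarith [sq_nonneg (s ^ 2 - 1)]
    have hb1 : b ^ 2 ≤ L ^ 2 := by nlinarith [sq_nonneg L]
    have e : f * b * uy = (f * b) * (s ^ 2 * uy) := by linear_combination (-f * uy) * hbs
    have e2 : (s ^ 2 * uy) ^ 2 = s ^ 2 * uy ^ 2 := by linear_combination uy ^ 2 * hs
    nlinarith [sq_nonneg (f * b - s ^ 2 * uy), mul_nonneg (sub_nonneg.2 hb1) (sq_nonneg f),
      mul_nonneg hs0 (sq_nonneg uy), sq_nonneg (f * b)]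
  have h3 : f * (1 / 2 * u) ≤ μ * u ^ 2 + 1 / (16 * μ) * f ^ 2 := by
    have : μ * u ^ 2 + 1 / (16 * μ) * f ^ 2 - f * (1 / 2 * u) = μ * (u - f / (4 * μ)) ^ 2 := by
      field_simp; ring
    have := mul_nonneg hμ.le (sq_nonneg (u - f / (4 * μ)))
    linarith
  have h4 : p * ux ^ 2 ≤ K1 * (w * ux ^ 2) := by nlinarith [sq_nonneg ux]
  have h5 : q * uy ^ 2 ≤ K1 * β * (s ^ 2 * uy ^ 2) := by
    have : q ≤ K1 * (β * s ^ 2) := hq'.trans (mul_le_mul_of_nonneg_left hw hK1)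
    nlinarith [sq_nonneg uy]
  have h6 : -(s * r * ux * uy) ≤ 1 / 8 * ux ^ 2 + 2 * K2 ^ 2 * (s ^ 2 * uy ^ 2) := by
    nlinarith [sq_nonneg (ux + 4 * s * r * uy),
      mul_nonneg (sub_nonneg.2 hr) (sq_nonneg (s * uy))]
  have h7 : -(1 / 2 * (p + q) * (ux ^ 2 + uy ^ 2 - l * u ^ 2)) ≤
      (K1 * β * l) * (s ^ 2 * u ^ 2) := by
    have : p + q ≤ 2 * (K1 * (β * s ^ 2)) := by
      have := mul_le_mul_of_nonneg_left hw hK1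
      linarith
    have h8 := mul_le_mul_of_nonneg_right this (mul_nonneg hl (sq_nonneg u))
    have h9 : 0 ≤ (p + q) * (ux ^ 2 + uy ^ 2) := by positivity
    linarith
  linarith

lemma int_le {α β : ℝ} (hα : 0 < α) (hβ : 0 < β) {g g0 g1 g2 g3 g4 g5 g6 : ℝ × ℝ → ℝ}
    (c1 c2 c3 c4 c5 c6 : ℝ)
    (h : LB g) (h0 : LB g0) (h1 : LB g1) (h2 : LB g2) (h3 : LB g3) (h4 : LB g4) (h5 : LB g5)
    (h6 : LB g6)
    (hle : ∀ p ∈ Stadium α β, g p ≤ g0 p + c1 * g1 p + c2 * g2 p + c3 * g3 p + c4 * g4 p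
      + c5 * g5 p + c6 * g6 p) :
    ∫ p in Stadium α β, g p ≤ (∫ p in Stadium α β, g0 p) + c1 * (∫ p in Stadium α β, g1 p)
      + c2 * (∫ p in Stadium α β, g2 p) + c3 * (∫ p in Stadium α β, g3 p)
      + c4 * (∫ p in Stadium α β, g4 p) + c5 * (∫ p in Stadium α β, g5 p)
      + c6 * (∫ p in Stadium α β, g6 p) := by
  have i0 := h0.integrableOn hα hβ
  have i1 := ((LB.const c1).mul h1).integrableOn hα hβ
  have i2 := ((LB.const c2).mul h2).integrableOn hα hβ
  have i3 := ((LB.const c3).mul h3).integrableOn hα hβ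
  have i4 := ((LB.const c4).mul h4).integrableOn hα hβ
  have i5 := ((LB.const c5).mul h5).integrableOn hα hβ
  have i6 := ((LB.const c6).mul h6).integrableOn hα hβ
  have j1 : IntegrableOn (fun p => g0 p + c1 * g1 p)
      (Stadium α β) := i0.add i1
  have j2 : IntegrableOn (fun p => g0 p + c1 * g1 p + c2 * g2 p)
      (Stadium α β) := j1.add i2
  have j3 : IntegrableOn (fun p => g0 p + c1 * g1 p + c2 * g2 p + c3 * g3 p)
      (Stadium α β) := j2.add i3
  have j4 : IntegrableOn (fun p => g0 p + c1 * g1 p + c2 * g2 p + c3 * g3 p + c4 * g4 p)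
      (Stadium α β) := j3.add i4
  have j5 : IntegrableOn (fun p => g0 p + c1 * g1 p + c2 * g2 p + c3 * g3 p + c4 * g4 p + c5 * g5 p)
      (Stadium α β) := j4.add i5
  have j6 : IntegrableOn (fun p => g0 p + c1 * g1 p + c2 * g2 p + c3 * g3 p + c4 * g4 p + c5 * g5 p + c6 * g6 p)
      (Stadium α β) := j5.add i6
  refine (setIntegral_mono_on (h.integrableOn hα hβ) j6
    (Stadium_closed hα hβ).measurableSet hle).trans_eq ?_
  simp only [← integral_const_mul]
  rw [← integral_add i0 i1, ← integral_add j1 i2, ← integral_add j2 i3, ← integral_add j3 i4,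
    ← integral_add j4 i5, ← integral_add j5 i6]

lemma geo_bounds {α β : ℝ} (hα : 0 < α) (hβ : 0 < β) {p : ℝ × ℝ} (hp : p ∈ Stadium α β) :
    |p.1| ≤ α + β ∧ |p.2| ≤ β ∧ 0 ≤ wf α p.1 ∧ wf α p.1 ≤ β ∧
    wf α p.1 ≤ β * sf α p.1 ^ 2 ∧ sf α p.1 ^ 4 = sf α p.1 ^ 2 ∧
    wf α p.1 * sf α p.1 ^ 2 = wf α p.1 ∧
    wf α p.1 * (p.1 * sf α p.1) = wf α p.1 * (wf α p.1 + α) := by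
  obtain ⟨x, y⟩ := p
  have h1 := (mem_Stadium1 hα hβ x y).1 hp
  have h2 := (Stadium_box hα hβ hp).1
  have h3 := wf_le hβ h2
  refine ⟨h2, abs_le.2 h1.1, wf_nonneg _ _, h3, ?_⟩
  simp only at h3 ⊢
  rcases sf_cases hα x with ⟨e1, e2, _⟩ | ⟨e1, e2, _⟩ | ⟨e1, e2, _⟩
  · rw [e1]; refine ⟨by linarith, by norm_num, by ring, by rw [e2]; ring⟩
  · rw [e1]; refine ⟨by linarith, by norm_num, by ring, by rw [e2]; ring⟩
  · rw [e1, e2]; norm_num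

lemma ptM {α β : ℝ} (hα : 0 < α) (hβ : 0 < β) {p : ℝ × ℝ} (hp : p ∈ Stadium α β)
    {μ l u ux uy uxx uxy uyy : ℝ} (hμ : 0 < μ) (hl : 0 ≤ l) :
    ux ^ 2 ≤ (((uxx * (af α β p * ux + bf α β p * uy + 1 / 2 * u) +
        ux * (a0f α β p * ux + af α β p * uxx + bf α β p * uxy + 1 / 2 * ux)
        - 1 / 2 * (a0f α β p * (ux ^ 2 + uy ^ 2 - l * u ^ 2) +
          af α β p * (2 * ux * uxx + 2 * uy * uxy - l * (2 * u * ux)))) +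
      sf α p.1 * (ux * (a1f α β p * ux + b1f α β p * uy)
        - 1 / 2 * a1f α β p * (ux ^ 2 + uy ^ 2 - l * u ^ 2))) +
      (uyy * (af α β p * ux + bf α β p * uy + 1 / 2 * u) +
        uy * (af α β p * uxy + byf α β p * uy + bf α β p * uyy + 1 / 2 * uy)
        - 1 / 2 * (byf α β p * (ux ^ 2 + uy ^ 2 - l * u ^ 2) +
          bf α β p * (2 * ux * uxy + 2 * uy * uyy - l * (2 * u * uy))))) +
    1 / 4 * ux ^ 2 + (3 * (α + β) ^ 2 + 1 / (16 * μ)) * (-uxx - uyy - l * u) ^ 2 + μ * u ^ 2 +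
      ((β + 2 * (α + β)) / β ^ 2 * β + 2 * ((2 * β + α) / β) ^ 2 + 1) * (sf α p.1 ^ 2 * uy ^ 2) +
      (β + 2 * (α + β)) / β ^ 2 * (wf α p.1 * ux ^ 2) +
      ((β + 2 * (α + β)) / β ^ 2 * β * l) * (sf α p.1 ^ 2 * u ^ 2) := by
  obtain ⟨hx, hy, hw0, hwβ, hw, hs, hws, hxs⟩ := geo_bounds hα hβ hp
  have key := algM (L := α + β) (K1 := (β + 2 * (α + β)) / β ^ 2) (K2 := (2 * β + α) / β)
    (β := β) (μ := μ) (a := af α β p) (b := bf α β p)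
    (p := 1 - (a0f α β p + sf α p.1 * a1f α β p)) (q := -byf α β p) (r := b1f α β p)
    (s := sf α p.1) (w := wf α p.1) (f := -uxx - uyy - l * u) (u := u) (ux := ux) (uy := uy)
    (l := l) (by positivity) hμ hl hs hw ?_ ?_ ?_ ?_ ?_ ?_ ?_ ?_
  · linarith
  · have h1 : wf α p.1 ^ 2 / β ^ 2 ≤ 1 := by
      rw [div_le_one (by positivity)]; nlinarith
    have h0 : 0 ≤ wf α p.1 ^ 2 / β ^ 2 := by positivity
    rw [sq_le_sq, abs_of_pos (by linarith : 0 < α + β)]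
    unfold af
    rw [abs_mul, abs_of_nonneg (by linarith : 0 ≤ 1 - wf α p.1 ^ 2 / β ^ 2)]
    nlinarith [abs_nonneg p.1]
  · have e : bf α β p ^ 2 = ((wf α p.1 + α) * (p.2 / β)) ^ 2 * (wf α p.1 / β) ^ 2 := by
      unfold bf; field_simp
    have h1 : ((wf α p.1 + α) * (p.2 / β)) ^ 2 ≤ (α + β) ^ 2 := by
      rw [sq_le_sq, abs_mul, abs_div, abs_of_pos hβ, abs_of_pos (by linarith : 0 < α + β),
        abs_of_nonneg (by linarith : 0 ≤ wf α p.1 + α)]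
      have h2 : |p.2| / β ≤ 1 := (div_le_one hβ).2 hy
      have h3 : 0 ≤ |p.2| / β := by positivity
      nlinarith
    have h4 : (wf α p.1 / β) ^ 2 ≤ sf α p.1 ^ 2 := by
      rw [div_pow, div_le_iff₀ (by positivity)]
      nlinarith
    rw [e]
    exact mul_le_mul h1 h4 (sq_nonneg _) (sq_nonneg _)
  · unfold bf
    linear_combination (-((wf α p.1 + α) * p.2) / β ^ 2) * hws
  · have e : 1 - (a0f α β p + sf α p.1 * a1f α β p) =
        wf α p.1 * (wf α p.1 + 2 * (wf α p.1 + α)) / β ^ 2 := by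
      unfold a0f a1f; linear_combination (2 / β ^ 2) * hxs
    rw [e]; positivity
  · have e : 1 - (a0f α β p + sf α p.1 * a1f α β p) =
        wf α p.1 * (wf α p.1 + 2 * (wf α p.1 + α)) / β ^ 2 := by
      unfold a0f a1f; linear_combination (2 / β ^ 2) * hxs
    rw [e, div_mul_eq_mul_div, mul_comm]
    gcongr ?_ / β ^ 2
    exact mul_le_mul_of_nonneg_right (by linarith) hw0
  · unfold byf; rw [neg_div, neg_neg]; positivity
  · unfold byf; rw [neg_div, neg_neg, div_mul_eq_mul_div]
    gcongr ?_ / β ^ 2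
    exact mul_le_mul_of_nonneg_right (by linarith) hw0
  · have e : b1f α β p = -((2 * wf α p.1 + α) / β * (p.2 / β)) := by
      unfold b1f; field_simp
    rw [e, neg_sq, sq_le_sq, abs_mul, abs_div, abs_div, abs_div, abs_of_pos hβ,
      abs_of_nonneg (by linarith : 0 ≤ 2 * wf α p.1 + α),
      abs_of_nonneg (by linarith : 0 ≤ 2 * β + α)]
    have h2 : |p.2| / β ≤ 1 := (div_le_one hβ).2 hy
    have h3 : 0 ≤ |p.2| / β := by positivity
    have h5 : (2 * wf α p.1 + α) / β ≤ (2 * β + α) / β := by gcongr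
    have h6 : 0 ≤ (2 * wf α p.1 + α) / β := by positivity
    nlinarith

lemma final_alg {c μ C1 C2 C2' K1 K3 κ β l A F D Q1 Q2 Hx Hy : ℝ}
    (hc : c ≤ A) (hμ : μ = c / 8) (hC1 : 0 ≤ C1) (hK1 : 0 ≤ K1) (hK3 : 0 ≤ K3)
    (hC2' : 0 ≤ C2') (hC2 : C2 = C2' + K1) (hκ : 0 < κ) (hκ1 : C2 * κ ≤ 1 / 4)
    (hκ2 : C2 * κ ≤ c / 32) (hl : 1 ≤ l) (hF : 0 ≤ F) (hD : 0 ≤ D) (hQ1 : 0 ≤ Q1)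
    (hQ2 : 0 ≤ Q2) (hHx : 0 ≤ Hx) (hHy : 0 ≤ Hy) (hcp : 0 < c)
    (M : A ≤ 1 / 4 * A + C1 * F + μ * 1 + C2' * Q1 + K1 * Q2 + K3 * l * D)
    (R1 : Q1 ≤ κ / l ^ 2 * Hy + l ^ 2 / (4 * κ) * D)
    (R2 : Q2 ≤ κ * A + 1 / (4 * κ) * D + κ / l ^ 2 * Hx + β ^ 2 * l ^ 2 / (4 * κ) * D)
    (H : Hx + Hy ≤ 2 * l ^ 2 + 2 * F) :
    5 * c / 16 / (C1 + 1 / 2 + C2 * (2 + β ^ 2) / (4 * κ) + K3) ≤ F + l ^ 2 * D := by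
  have hl2 : l ≤ l ^ 2 := by nlinarith
  have hl1 : 1 ≤ l ^ 2 := by linarith
  have hC20 : 0 ≤ C2 := by linarith
  have e1 : κ / l ^ 2 * Hx + κ / l ^ 2 * Hy ≤ κ * (2 + 2 * F) := by
    rw [← mul_add, div_mul_eq_mul_div, div_le_iff₀ (by positivity), mul_assoc]
    refine mul_le_mul_of_nonneg_left ?_ hκ.le
    have : F ≤ F * l ^ 2 := le_mul_of_one_le_right hF hl1
    linarith
  have e2 : C2' * Q1 + K1 * Q2 ≤ C2 * (Q1 + Q2) := by
    have n1 := mul_nonneg hC2' hQ2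
    have n2 := mul_nonneg hK1 hQ1
    have : C2 * (Q1 + Q2) = C2' * Q1 + K1 * Q2 + (C2' * Q2 + K1 * Q1) := by rw [hC2]; ring
    linarith
  have e3 : l ^ 2 / (4 * κ) * D + 1 / (4 * κ) * D + β ^ 2 * l ^ 2 / (4 * κ) * D ≤
      (2 + β ^ 2) / (4 * κ) * (l ^ 2 * D) := by
    have : 1 / (4 * κ) * D ≤ 1 / (4 * κ) * (l ^ 2 * D) :=
      mul_le_mul_of_nonneg_left (le_mul_of_one_le_left hD hl1) (by positivity)
    have e : (2 + β ^ 2) / (4 * κ) * (l ^ 2 * D) = l ^ 2 / (4 * κ) * D +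
      1 / (4 * κ) * (l ^ 2 * D) + β ^ 2 * l ^ 2 / (4 * κ) * D := by ring
    linarith
  have e4 : Q1 + Q2 ≤ κ * (2 + 2 * F) + κ * A + (2 + β ^ 2) / (4 * κ) * (l ^ 2 * D) := by
    linarith
  have e5 := mul_le_mul_of_nonneg_left e4 hC20
  have hA : 0 ≤ A := by linarith
  have e6 : C2 * κ * (2 + 2 * F) ≤ c / 16 + F / 2 := by
    have n1 := mul_le_mul_of_nonneg_right hκ1 hF
    have : C2 * κ * (2 + 2 * F) = 2 * (C2 * κ) + 2 * (C2 * κ * F) := by ring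
    linarith
  have e7 : C2 * κ * A ≤ 1 / 4 * A := mul_le_mul_of_nonneg_right hκ1 hA
  have e8 : K3 * l * D ≤ K3 * (l ^ 2 * D) := by
    rw [mul_assoc]
    exact mul_le_mul_of_nonneg_left (mul_le_mul_of_nonneg_right hl2 hD) hK3
  have e9 : C2 * (κ * (2 + 2 * F) + κ * A + (2 + β ^ 2) / (4 * κ) * (l ^ 2 * D)) =
    C2 * κ * (2 + 2 * F) + C2 * κ * A + C2 * (2 + β ^ 2) / (4 * κ) * (l ^ 2 * D) := by ring
  have hX : 0 ≤ l ^ 2 * D := by positivity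
  have hC5 : 0 ≤ C2 * (2 + β ^ 2) / (4 * κ) := by positivity
  rw [div_le_iff₀ (by positivity)]
  have e10 : 5 * c / 16 ≤ (C1 + 1 / 2) * F + (C2 * (2 + β ^ 2) / (4 * κ) + K3) * (l ^ 2 * D) := by
    have e11 : (C1 + 1 / 2) * F + (C2 * (2 + β ^ 2) / (4 * κ) + K3) * (l ^ 2 * D) =
      C1 * F + F / 2 + C2 * (2 + β ^ 2) / (4 * κ) * (l ^ 2 * D) + K3 * (l ^ 2 * D) := by ring
    rw [e11]
    linarith
  have e12 : (F + l ^ 2 * D) * (C1 + 1 / 2 + C2 * (2 + β ^ 2) / (4 * κ) + K3) =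
    ((C1 + 1 / 2) * F + (C2 * (2 + β ^ 2) / (4 * κ) + K3) * (l ^ 2 * D)) +
    (C1 * (l ^ 2 * D) + 1 / 2 * (l ^ 2 * D) + C2 * (2 + β ^ 2) / (4 * κ) * F + K3 * F) := by ring
  have n1 := mul_nonneg hC1 hX
  have n2 := mul_nonneg hC5 hF
  have n3 := mul_nonneg hK3 hF
  linarith

lemma ptR1 {κ l s u v : ℝ} (hκ : 0 < κ) (hl : 0 < l) (hs : s ^ 4 = s ^ 2) (w : ℝ) :
    s ^ 2 * w ≤ s ^ 2 * (w + u * v) + κ / l ^ 2 * v ^ 2 + l ^ 2 / (4 * κ) * (s ^ 2 * u ^ 2) := by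
  have e : κ / l ^ 2 * v ^ 2 + l ^ 2 / (4 * κ) * (s ^ 4 * u ^ 2) + s ^ 2 * (u * v)
      = κ / l ^ 2 * (v + l ^ 2 / (2 * κ) * (s ^ 2 * u)) ^ 2 := by
    field_simp; ring
  rw [hs] at e
  have : 0 ≤ κ / l ^ 2 * (v + l ^ 2 / (2 * κ) * (s ^ 2 * u)) ^ 2 := by positivity
  linarith

lemma ptR2 {κ l s w β u ux v : ℝ} (hκ : 0 < κ) (hl : 0 < l) (hw0 : 0 ≤ w) (hwβ : w ≤ β)
    (hw : w ≤ β * s ^ 2) :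
    w * ux ^ 2 ≤ s * (u * ux) + w * (ux ^ 2 + u * v) + κ * ux ^ 2
      + 1 / (4 * κ) * (s ^ 2 * u ^ 2)
      + κ / l ^ 2 * v ^ 2 + β ^ 2 * l ^ 2 / (4 * κ) * (s ^ 2 * u ^ 2) := by
  have e1 : κ * ux ^ 2 + 1 / (4 * κ) * (s ^ 2 * u ^ 2) + s * (u * ux)
      = κ * (ux + 1 / (2 * κ) * (s * u)) ^ 2 := by
    field_simp; ring
  have e2 : κ / l ^ 2 * v ^ 2 + l ^ 2 / (4 * κ) * (w ^ 2 * u ^ 2) + w * (u * v)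
      = κ / l ^ 2 * (v + l ^ 2 / (2 * κ) * (w * u)) ^ 2 := by
    field_simp; ring
  have hw2 : w ^ 2 ≤ β ^ 2 * s ^ 2 := by
    have h1 : w * w ≤ β * (β * s ^ 2) := mul_le_mul hwβ hw hw0 (by linarith)
    linarith
  have e3 : l ^ 2 / (4 * κ) * (w ^ 2 * u ^ 2) ≤ l ^ 2 / (4 * κ) * (β ^ 2 * s ^ 2 * u ^ 2) := by
    gcongr
  have e4 : l ^ 2 / (4 * κ) * (β ^ 2 * s ^ 2 * u ^ 2)
      = β ^ 2 * l ^ 2 / (4 * κ) * (s ^ 2 * u ^ 2) := by ring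
  have f1 : 0 ≤ κ * (ux + 1 / (2 * κ) * (s * u)) ^ 2 := by positivity
  have f2 : 0 ≤ κ / l ^ 2 * (v + l ^ 2 / (2 * κ) * (w * u)) ^ 2 := by positivity
  linarith

section
variable {α β : ℝ} {u ux uy uxx uxy uyy t : ℝ × ℝ → ℝ}

lemma intP (hα : 0 < α) (hβ : 0 < β) (J : Jet u ux uy uxx uxy uyy t)
    (hb : ∀ p ∈ StadiumBoundary α β, u p = 0) (hN : (∫ p in Stadium α β, (u p) ^ 2) = 1) :
    1 / (4 * (α + β) ^ 2) ≤ ∫ p in Stadium α β, ux p ^ 2 := by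
  have := J.cu; have := J.cux
  have Lu : LB (fun p => u p ^ 2) := LB.of_cont (by fun_prop)
  have Lux : LB (fun p => ux p ^ 2) := LB.of_cont (by fun_prop)
  have P := int_le hα hβ (1/2) (2 * (α + β) ^ 2) 0 0 0 0 Lu
    (g0 := fun p => u p ^ 2 + 2 * p.1 * u p * ux p) (LB.of_cont (by fun_prop))
    Lu Lux Lu Lu Lu Lu (by
      intro p hp
      obtain ⟨hx, -⟩ := geo_bounds hα hβ hp
      have hx2 : p.1 ^ 2 ≤ (α + β) ^ 2 := by
        rw [sq_le_sq, abs_of_pos (by linarith : 0 < α + β)]; exact hx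
      nlinarith [sq_nonneg (u p + 2 * p.1 * ux p),
        mul_nonneg (sub_nonneg.2 hx2) (sq_nonneg (ux p))])
  rw [relP hα hβ J hb, hN] at P
  rw [div_le_iff₀ (by positivity)]; linarith

lemma intM (hα : 0 < α) (hβ : 0 < β) (J : Jet u ux uy uxx uxy uyy t)
    (hb : ∀ p ∈ StadiumBoundary α β, u p = 0) (hN : (∫ p in Stadium α β, (u p) ^ 2) = 1)
    {l μ C1 C2' K1 : ℝ} (hl : 0 ≤ l) (hμ : 0 < μ)
    (hC1 : C1 = 3 * (α + β) ^ 2 + 1 / (16 * μ))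
    (hK1 : K1 = (β + 2 * (α + β)) / β ^ 2)
    (hC2' : C2' = (β + 2 * (α + β)) / β ^ 2 * β + 2 * ((2 * β + α) / β) ^ 2 + 1) :
    (∫ p in Stadium α β, ux p ^ 2) ≤ 1 / 4 * (∫ p in Stadium α β, ux p ^ 2)
      + C1 * (∫ p in Stadium α β, (-uxx p - uyy p - l * u p) ^ 2) + μ * 1
      + C2' * (∫ p in Stadium α β, sf α p.1 ^ 2 * uy p ^ 2)
      + K1 * (∫ p in Stadium α β, wf α p.1 * ux p ^ 2)
      + K1 * β * l * (∫ p in Stadium α β, sf α p.1 ^ 2 * u p ^ 2) := by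
  have := J.cu; have := J.cux; have := J.cuy; have := J.cuxx; have := J.cuxy; have := J.cuyy
  have := wf_cont α
  have Lu : LB (fun p => u p ^ 2) := LB.of_cont (by fun_prop)
  have Lux : LB (fun p => ux p ^ 2) := LB.of_cont (by fun_prop)
  have Lf : LB (fun p => (-uxx p - uyy p - l * u p) ^ 2) := LB.of_cont (by fun_prop)
  have LD : LB (fun p => sf α p.1 ^ 2 * u p ^ 2) := (LB.sf α).pow2.mul Lu
  have LQ1 : LB (fun p => sf α p.1 ^ 2 * uy p ^ 2) :=
    (LB.sf α).pow2.mul (LB.of_cont (by fun_prop))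
  have LQ2 : LB (fun p => wf α p.1 * ux p ^ 2) := LB.of_cont (by fun_prop)
  obtain ⟨LM, IM⟩ := relM hα hβ J hb l
  have M := int_le hα hβ (1 / 4) C1 μ C2' K1 (K1 * β * l) Lux LM Lux Lf Lu LQ1 LQ2 LD (by
      intro p hp
      rw [hC1, hC2', hK1]
      exact ptM hα hβ hp hμ hl)
  rw [IM, hN] at M
  linarith

lemma intR1 (hα : 0 < α) (hβ : 0 < β) (J : Jet u ux uy uxx uxy uyy t)
    (hb : ∀ p ∈ StadiumBoundary α β, u p = 0)
    {l κ : ℝ} (hl : 0 < l) (hκ : 0 < κ) :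
    (∫ p in Stadium α β, sf α p.1 ^ 2 * uy p ^ 2) ≤
      κ / l ^ 2 * (∫ p in Stadium α β, uyy p ^ 2)
      + l ^ 2 / (4 * κ) * (∫ p in Stadium α β, sf α p.1 ^ 2 * u p ^ 2) := by
  have := J.cu; have := J.cux; have := J.cuy; have := J.cuxx; have := J.cuxy; have := J.cuyy
  have Lu : LB (fun p => u p ^ 2) := LB.of_cont (by fun_prop)
  have Lyy : LB (fun p => uyy p ^ 2) := LB.of_cont (by fun_prop)
  have LD : LB (fun p => sf α p.1 ^ 2 * u p ^ 2) := (LB.sf α).pow2.mul Lu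
  have LQ1 : LB (fun p => sf α p.1 ^ 2 * uy p ^ 2) :=
    (LB.sf α).pow2.mul (LB.of_cont (by fun_prop))
  have R1 := int_le hα hβ (κ / l ^ 2) (l ^ 2 / (4 * κ)) 0 0 0 0 LQ1
    (g0 := fun p => sf α p.1 ^ 2 * (uy p ^ 2 + u p * uyy p))
    ((LB.sf α).pow2.mul (LB.of_cont (by fun_prop))) Lyy LD Lu Lu Lu Lu (by
      intro p hp
      obtain ⟨-, -, -, -, -, hs, -⟩ := geo_bounds hα hβ hp
      have := ptR1 (u := u p) (v := uyy p) hκ hl hs (uy p ^ 2)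
      linarith)
  rw [relQ1 hα hβ J hb] at R1
  linarith

lemma intR2 (hα : 0 < α) (hβ : 0 < β) (J : Jet u ux uy uxx uxy uyy t)
    (hb : ∀ p ∈ StadiumBoundary α β, u p = 0)
    {l κ : ℝ} (hl : 0 < l) (hκ : 0 < κ) :
    (∫ p in Stadium α β, wf α p.1 * ux p ^ 2) ≤
      κ * (∫ p in Stadium α β, ux p ^ 2)
      + 1 / (4 * κ) * (∫ p in Stadium α β, sf α p.1 ^ 2 * u p ^ 2)
      + κ / l ^ 2 * (∫ p in Stadium α β, uxx p ^ 2)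
      + β ^ 2 * l ^ 2 / (4 * κ) * (∫ p in Stadium α β, sf α p.1 ^ 2 * u p ^ 2) := by
  have := J.cu; have := J.cux; have := J.cuy; have := J.cuxx; have := J.cuxy; have := J.cuyy
  have := wf_cont α
  have Lu : LB (fun p => u p ^ 2) := LB.of_cont (by fun_prop)
  have Lux : LB (fun p => ux p ^ 2) := LB.of_cont (by fun_prop)
  have Lxx : LB (fun p => uxx p ^ 2) := LB.of_cont (by fun_prop)
  have LD : LB (fun p => sf α p.1 ^ 2 * u p ^ 2) := (LB.sf α).pow2.mul Lu
  have LQ2 : LB (fun p => wf α p.1 * ux p ^ 2) := LB.of_cont (by fun_prop)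
  have L1 : LB (fun p => u p * ux p) := LB.of_cont (by fun_prop)
  have L2 : LB (fun p => wf α p.1 * (ux p ^ 2 + u p * uxx p)) := LB.of_cont (by fun_prop)
  have L0 : LB (fun p => sf α p.1 * (u p * ux p) + wf α p.1 * (ux p ^ 2 + u p * uxx p)) :=
    ((LB.sf α).mul L1).add L2
  have R2 := int_le hα hβ κ (1 / (4 * κ)) (κ / l ^ 2) (β ^ 2 * l ^ 2 / (4 * κ)) 0 0 LQ2
    L0 Lux LD Lxx LD Lu Lu (by
      intro p hp
      obtain ⟨-, -, hw0, hwβ, hw, hs, -⟩ := geo_bounds hα hβ hp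
      have := ptR2 (u := u p) (ux := ux p) (v := uxx p) hκ hl hw0 hwβ hw
      linarith)
  rw [relQ2 hα hβ J hb] at R2
  linarith

lemma intH (hα : 0 < α) (hβ : 0 < β) (J : Jet u ux uy uxx uxy uyy t)
    (hb : ∀ p ∈ StadiumBoundary α β, u p = 0) (hN : (∫ p in Stadium α β, (u p) ^ 2) = 1)
    (l : ℝ) :
    (∫ p in Stadium α β, uxx p ^ 2) + (∫ p in Stadium α β, uyy p ^ 2) ≤
      2 * l ^ 2 + 2 * (∫ p in Stadium α β, (-uxx p - uyy p - l * u p) ^ 2) := by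
  have := J.cu; have := J.cux; have := J.cuy; have := J.cuxx; have := J.cuxy; have := J.cuyy
  have Lu : LB (fun p => u p ^ 2) := LB.of_cont (by fun_prop)
  have Lf : LB (fun p => (-uxx p - uyy p - l * u p) ^ 2) := LB.of_cont (by fun_prop)
  have Lxx : LB (fun p => uxx p ^ 2) := LB.of_cont (by fun_prop)
  have Lyy : LB (fun p => uyy p ^ 2) := LB.of_cont (by fun_prop)
  have H := int_le hα hβ (g := fun p => uxx p ^ 2 + uyy p ^ 2)
    (-2) (2 * l ^ 2) 2 0 0 0 (Lxx.add Lyy) (LB.const 0)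
    (g1 := fun p => uxx p * uyy p - uxy p ^ 2) (LB.of_cont (by fun_prop)) Lu Lf Lu Lu Lu (by
      intro p hp
      nlinarith [sq_nonneg (uxy p), sq_nonneg (l * u p - (-uxx p - uyy p - l * u p))])
  rw [hN, integral_add (Lxx.integrableOn hα hβ) (Lyy.integrableOn hα hβ)] at H
  simp only [integral_zero] at H
  have H0 := relH hα hβ J hb
  linarith

end

lemma jet_main (α β : ℝ) (hα : 0 < α) (hβ : 0 < β) :
    ∃ C > 0, ∀ (u ux uy uxx uxy uyy t : ℝ × ℝ → ℝ) (l : ℝ), Jet u ux uy uxx uxy uyy t →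
      (∀ p ∈ StadiumBoundary α β, u p = 0) → 1 ≤ l →
      (∫ p in Stadium α β, (u p) ^ 2) = 1 →
      C ≤ (∫ p in Stadium α β, (-uxx p - uyy p - l * u p) ^ 2) +
        l ^ 2 * ∫ p in Stadium α β, sf α p.1 ^ 2 * u p ^ 2 := by
  obtain ⟨K1, hK1⟩ : ∃ K1, K1 = (β + 2 * (α + β)) / β ^ 2 := ⟨_, rfl⟩
  have hK10 : 0 < K1 := by rw [hK1]; positivity
  obtain ⟨C2', hC2'⟩ : ∃ C2', C2' = (β + 2 * (α + β)) / β ^ 2 * β + 2 * ((2 * β + α) / β) ^ 2 + 1 :=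
    ⟨_, rfl⟩
  have hC2p : 0 < C2' := by rw [hC2']; positivity
  obtain ⟨c, hc⟩ : ∃ c, c = 1 / (4 * (α + β) ^ 2) := ⟨_, rfl⟩
  have hc0 : 0 < c := by rw [hc]; positivity
  obtain ⟨C2, hC2⟩ : ∃ C2, C2 = C2' + K1 := ⟨_, rfl⟩
  have hC20 : 0 < C2 := by linarith
  obtain ⟨κ, hκ⟩ : ∃ κ, κ = min (1 / 4) (c / 32) / C2 := ⟨_, rfl⟩
  have hκ0 : 0 < κ := by rw [hκ]; positivity
  have hκe : C2 * κ = min (1 / 4) (c / 32) := by rw [hκ]; field_simp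
  obtain ⟨C1, hC1⟩ : ∃ C1, C1 = 3 * (α + β) ^ 2 + 1 / (16 * (c / 8)) := ⟨_, rfl⟩
  have hC10 : 0 < C1 := by rw [hC1]; positivity
  refine ⟨5 * c / 16 / (C1 + 1 / 2 + C2 * (2 + β ^ 2) / (4 * κ) + K1 * β), by positivity, ?_⟩
  intro u ux uy uxx uxy uyy t l J hb hl hN
  have hl0 : 0 < l := by linarith
  have hcA := intP hα hβ J hb hN
  rw [← hc] at hcA
  exact final_alg (c := c) (μ := c / 8) (C1 := C1) (C2 := C2) (C2' := C2') (K1 := K1)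
    (K3 := K1 * β) (κ := κ) (β := β) (l := l)
    (A := ∫ p in Stadium α β, ux p ^ 2) (Q1 := ∫ p in Stadium α β, sf α p.1 ^ 2 * uy p ^ 2)
    (Q2 := ∫ p in Stadium α β, wf α p.1 * ux p ^ 2) (Hx := ∫ p in Stadium α β, uxx p ^ 2)
    (Hy := ∫ p in Stadium α β, uyy p ^ 2)
    hcA rfl hC10.le hK10.le (by positivity) hC2p.le hC2 hκ0
    (hκe.trans_le (min_le_left _ _)) (hκe.trans_le (min_le_right _ _)) hl
    (integral_nonneg fun p => sq_nonneg _)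
    (integral_nonneg fun p => mul_nonneg (sq_nonneg _) (sq_nonneg _))
    (integral_nonneg fun p => mul_nonneg (sq_nonneg _) (sq_nonneg _))
    (integral_nonneg fun p => mul_nonneg (wf_nonneg _ _) (sq_nonneg _))
    (integral_nonneg fun p => sq_nonneg _) (integral_nonneg fun p => sq_nonneg _) hc0
    (intM hα hβ J hb hN hl0.le (by positivity) hC1 hK1 hC2')
    (intR1 hα hβ J hb hl0 hκ0) (intR2 hα hβ J hb hl0 hκ0) (intH hα hβ J hb hN l)

/-! ### Smoothness -/

open scoped ContDiff

lemma pdx_eq {U : ℝ × ℝ → ℝ} (h : ContDiff ℝ ∞ U) :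
    pdx U = fun p => fderiv ℝ U p (1, 0) := by
  ext ⟨x, y⟩
  have h1 : HasFDerivAt U (fderiv ℝ U (x, y)) (x, y) :=
    (h.differentiable (by simp) (x, y)).hasFDerivAt
  have h2 : HasDerivAt (fun t : ℝ => (t, y)) ((1 : ℝ), (0 : ℝ)) x :=
    (hasDerivAt_id x).prodMk (hasDerivAt_const x y)
  exact (h1.comp_hasDerivAt x h2).deriv

lemma pdy_eq {U : ℝ × ℝ → ℝ} (h : ContDiff ℝ ∞ U) :
    pdy U = fun p => fderiv ℝ U p (0, 1) := by
  ext ⟨x, y⟩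
  have h1 : HasFDerivAt U (fderiv ℝ U (x, y)) (x, y) :=
    (h.differentiable (by simp) (x, y)).hasFDerivAt
  have h2 : HasDerivAt (fun t : ℝ => (x, t)) ((0 : ℝ), (1 : ℝ)) y :=
    (hasDerivAt_const y x).prodMk (hasDerivAt_id y)
  exact (h1.comp_hasDerivAt y h2).deriv

lemma pdx_smooth {U : ℝ × ℝ → ℝ} (h : ContDiff ℝ ∞ U) : ContDiff ℝ ∞ (pdx U) := by
  rw [pdx_eq h]
  exact (h.fderiv_right (m := ∞) (by simp)).clm_apply contDiff_const

lemma pdy_smooth {U : ℝ × ℝ → ℝ} (h : ContDiff ℝ ∞ U) : ContDiff ℝ ∞ (pdy U) := by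
  rw [pdy_eq h]
  exact (h.fderiv_right (m := ∞) (by simp)).clm_apply contDiff_const

lemma pd_curve {U : ℝ × ℝ → ℝ} (h : ContDiff ℝ ∞ U) (c d : ℝ → ℝ) (c' d' θ : ℝ)
    (hc : HasDerivAt c c' θ) (hd : HasDerivAt d d' θ) :
    HasDerivAt (fun s => U (c s, d s))
      (pdx U (c θ, d θ) * c' + pdy U (c θ, d θ) * d') θ := by
  have h1 : HasFDerivAt U (fderiv ℝ U (c θ, d θ)) (c θ, d θ) :=
    (h.differentiable (by simp) _).hasFDerivAt
  have h2 : HasDerivAt (fun s : ℝ => (c s, d s)) (c', d') θ := hc.prodMk hd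
  refine (h1.comp_hasDerivAt θ h2).congr_deriv ?_
  rw [pdx_eq h, pdy_eq h]
  have : ((c', d') : ℝ × ℝ) = c' • ((1 : ℝ), (0 : ℝ)) + d' • ((0 : ℝ), (1 : ℝ)) := by
    simp
  rw [this, map_add, map_smul, map_smul]
  simp only [smul_eq_mul]
  ring

lemma pd_x {U : ℝ × ℝ → ℝ} (h : ContDiff ℝ ∞ U) (x y : ℝ) :
    HasDerivAt (fun s => U (s, y)) (pdx U (x, y)) x :=
  (pd_curve h (fun s => s) (fun _ => y) 1 0 x (hasDerivAt_id' x)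
    (hasDerivAt_const x y)).congr_deriv (by ring)

lemma pd_y {U : ℝ × ℝ → ℝ} (h : ContDiff ℝ ∞ U) (x y : ℝ) :
    HasDerivAt (fun s => U (x, s)) (pdy U (x, y)) y :=
  (pd_curve h (fun _ => x) (fun s => s) 0 1 y (hasDerivAt_const y x)
    (hasDerivAt_id' y)).congr_deriv (by ring)

lemma pd_comm {U : ℝ × ℝ → ℝ} (h : ContDiff ℝ ∞ U) : pdx (pdy U) = pdy (pdx U) := by
  rw [pdx_eq (pdy_smooth h), pdy_eq (pdx_smooth h)]
  ext p
  have hd : DifferentiableAt ℝ (fderiv ℝ U) p :=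
    ((h.fderiv_right (m := ∞) (by simp)).differentiable (by simp)) p
  have key : ∀ v w : ℝ × ℝ, fderiv ℝ (fun q => fderiv ℝ U q v) p w
      = fderiv ℝ (fderiv ℝ U) p w v := by
    intro v w
    rw [fderiv_clm_apply hd (differentiableAt_const v)]
    simp
  have hs : IsSymmSndFDerivAt ℝ U p :=
    h.contDiffAt.isSymmSndFDerivAt (by simpa using (WithTop.coe_le_coe.2 le_top : (((2 : ℕ∞) : WithTop ℕ∞)) ≤ ∞))
  rw [pdy_eq h, pdx_eq h, key, key]
  exact hs.eq _ _

lemma jet_of_smooth {U : ℝ × ℝ → ℝ} (h : ContDiff ℝ ∞ U) :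
    Jet U (pdx U) (pdy U) (pdx (pdx U)) (pdx (pdy U)) (pdy (pdy U)) (pdx (pdy (pdy U))) := by
  have hx := pdx_smooth h
  have hy := pdy_smooth h
  have hxx := pdx_smooth hx
  have hxy := pdx_smooth hy
  have hyy := pdy_smooth hy
  have ht := pdx_smooth hyy
  have e := pd_comm h
  have e2 := pd_comm hy
  exact
  { cu := h.continuous
    cux := hx.continuous
    cuy := hy.continuous
    cuxx := hxx.continuous
    cuxy := hxy.continuous
    cuyy := hyy.continuous
    ct := ht.continuous
    u_x := pd_x h
    u_y := pd_y h
    ux_x := pd_x hx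
    ux_y := fun x y => by rw [e]; exact pd_y hx x y
    uy_x := pd_x hy
    uy_y := pd_y hy
    uyy_x := pd_x hyy
    uxy_y := fun x y => by rw [e2]; exact pd_y hxy x y
    u_c := pd_curve h
    ux_c := fun c d c' d' θ hc hd => by rw [e]; exact pd_curve hx c d c' d' θ hc hd
    uy_c := pd_curve hy }

lemma pdx_congr {U V : ℝ × ℝ → ℝ} {p : ℝ × ℝ} (h : U =ᶠ[nhds p] V) :
    pdx U =ᶠ[nhds p] pdx V := by
  filter_upwards [h.eventually_nhds] with q hq
  unfold pdx
  apply Filter.EventuallyEq.deriv_eq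
  have : Tendsto (fun t : ℝ => (t, q.2)) (nhds q.1) (nhds q) :=
    Continuous.tendsto' (by fun_prop) _ _ rfl
  exact this.eventually hq

lemma pdy_congr {U V : ℝ × ℝ → ℝ} {p : ℝ × ℝ} (h : U =ᶠ[nhds p] V) :
    pdy U =ᶠ[nhds p] pdy V := by
  filter_upwards [h.eventually_nhds] with q hq
  unfold pdy
  apply Filter.EventuallyEq.deriv_eq
  have : Tendsto (fun t : ℝ => (q.1, t)) (nhds q.2) (nhds q) :=
    Continuous.tendsto' (by fun_prop) _ _ rfl
  exact this.eventually hq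

lemma exists_ext {K V : Set (ℝ × ℝ)} (hK : IsCompact K) (hV : IsOpen V) (hKV : K ⊆ V)
    {u : ℝ × ℝ → ℝ} (hu : ContDiffOn ℝ ∞ u V) :
    ∃ U : ℝ × ℝ → ℝ, ContDiff ℝ ∞ U ∧ ∀ p ∈ K, U =ᶠ[nhds p] u := by
  obtain ⟨K', hK', hKK', hK'V⟩ := exists_compact_between hK hV hKV
  obtain ⟨χ, h1, h2, _⟩ :=
    exists_contMDiffMap_one_nhds_of_subset_interior (modelWithCornersSelf ℝ (ℝ × ℝ)) (n := (⊤ : ℕ∞))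
      hK.isClosed hKK'
  have hχ : ContDiff ℝ ∞ χ := χ.contMDiff.contDiff
  refine ⟨fun p => χ p * u p, ?_, ?_⟩
  · rw [contDiff_iff_contDiffAt]
    intro p
    by_cases hp : p ∈ V
    · exact hχ.contDiffAt.mul (hu.contDiffAt (hV.mem_nhds hp))
    · have hp' : p ∉ K' := fun h => hp (hK'V h)
      have : (fun p => χ p * u p) =ᶠ[nhds p] fun _ => 0 := by
        filter_upwards [hK'.isClosed.isOpen_compl.mem_nhds hp'] with q hq
        rw [h2 q hq, zero_mul]
      exact contDiffAt_const.congr_of_eventuallyEq this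
  · intro p hp
    filter_upwards [h1.filter_mono (nhds_le_nhdsSet hp)] with q hq
    rw [hq, one_mul]

lemma bdry_sub {α β : ℝ} (hα : 0 < α) (hβ : 0 < β) : StadiumBoundary α β ⊆ Stadium α β := by
  rintro ⟨x, y⟩ hp
  rw [mem_Stadium hα hβ]
  rcases hp with ⟨h1, h2⟩ | ⟨h1, h2⟩
  · simp only at h1 h2
    have : wf α x = 0 := max_eq_right (by linarith)
    rw [this]
    rcases h2 with h | h <;> rw [h] <;> nlinarith
  · simp only at h1 h2
    have : wf α x = |x| - α := max_eq_left (by linarith)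
    rw [this]; exact h1.le

lemma wings_meas (α β : ℝ) : MeasurableSet (Wings α β) := by
  apply IsClosed.measurableSet
  refine IsClosed.union ?_ ?_
  · rw [setOf_and]
    exact IsClosed.inter (isClosed_le (by fun_prop) (by fun_prop))
      (isClosed_le (by fun_prop) (by fun_prop))
  · rw [setOf_and]
    exact IsClosed.inter (isClosed_le (by fun_prop) (by fun_prop))
      (isClosed_le (by fun_prop) (by fun_prop))

lemma int_wings {α β : ℝ} (hα : 0 < α) (hβ : 0 < β) {U : ℝ × ℝ → ℝ} (hU : Continuous U) :
    ∫ p in Stadium α β, sf α p.1 ^ 2 * U p ^ 2 ≤ ∫ p in Wings α β, U p ^ 2 := by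
  have Lu : LB (fun p => U p ^ 2) := LB.of_cont (by fun_prop)
  have LD : LB (fun p => sf α p.1 ^ 2 * U p ^ 2) := (LB.sf α).pow2.mul Lu
  have hW : Wings α β = Stadium α β ∩ Wings α β :=
    (inter_eq_right.2 subset_union_right).symm
  rw [hW, ← setIntegral_indicator (wings_meas α β)]
  refine setIntegral_mono_on (LD.integrableOn hα hβ)
    ((Lu.integrableOn hα hβ).indicator (wings_meas α β))
    (Stadium_closed hα hβ).measurableSet ?_
  intro p hp
  by_cases hw : p ∈ Wings α β
  · rw [indicator_of_mem hw]
    have : sf α p.1 ^ 2 ≤ 1 := by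
      rcases sf_cases hα p.1 with ⟨e, _⟩ | ⟨e, _⟩ | ⟨e, _⟩ <;> rw [e] <;> norm_num
    nlinarith [sq_nonneg (U p)]
  · rw [indicator_of_notMem hw]
    have hr : p ∈ Rect α β := hp.resolve_right hw
    have : sf α p.1 = 0 := by
      unfold sf
      rw [if_neg (not_lt.2 hr.1.2), if_neg (not_lt.2 hr.1.1)]
    rw [this]; simp

/-- There are `C > 0` and `λ₀ > 0` depending only on `α, β` such that every
real Dirichlet quasimode datum with `λ ≥ λ₀` and `‖u‖_{L²(S)} = 1` satisfies
`‖f‖²_{L²(S)} + λ⁸ ‖u‖²_{L²(W)} ≥ C`. -/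
theorem stmt1 (α β : ℝ) (hα : 0 < α) (hβ : 0 < β) :
    ∃ C > 0, ∃ lam₀ > 0, ∀ d : QMDatum α β, d.lam ≥ lam₀ →
      (∫ p in Stadium α β, (d.u p) ^ 2) = 1 →
      (∫ p in Stadium α β, (d.f p) ^ 2) +
        d.lam ^ 8 * (∫ p in Wings α β, (d.u p) ^ 2) ≥ C := by
  obtain ⟨C, hC, hmain⟩ := jet_main α β hα hβ
  refine ⟨C, hC, 1, one_pos, ?_⟩
  intro d hlam hN
  obtain ⟨V, hV, hSV, hu⟩ := d.smooth
  obtain ⟨U, hU, hUu⟩ := exists_ext (Stadium_compact hα hβ) hV hSV hu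
  have hm := (Stadium_closed hα hβ).measurableSet
  have hlam' : 1 ≤ d.lam := hlam
  have hl : 1 ≤ d.lam ^ 2 := one_le_pow₀ hlam'
  have eu : ∀ p ∈ Stadium α β, U p = d.u p := fun p hp => (hUu p hp).eq_of_nhds
  have ef : ∀ p ∈ Stadium α β,
      -pdx (pdx U) p - pdy (pdy U) p - d.lam ^ 2 * U p = d.f p := by
    intro p hp
    rw [← d.eqn p hp, eu p hp, lap, (pdx_congr (pdx_congr (hUu p hp))).eq_of_nhds,
      (pdy_congr (pdy_congr (hUu p hp))).eq_of_nhds]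
  have i1 : ∫ p in Stadium α β, U p ^ 2 = 1 := by
    rw [← hN]
    exact setIntegral_congr_fun hm fun p hp => by simp only [eu p hp]
  have i2 : ∫ p in Stadium α β, (-pdx (pdx U) p - pdy (pdy U) p - d.lam ^ 2 * U p) ^ 2 =
      ∫ p in Stadium α β, d.f p ^ 2 :=
    setIntegral_congr_fun hm fun p hp => by simp only [ef p hp]
  have i3 : ∫ p in Wings α β, U p ^ 2 = ∫ p in Wings α β, d.u p ^ 2 :=
    setIntegral_congr_fun (wings_meas α β) fun p hp => by
      simp only [eu p (subset_union_right hp)]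
  have key := hmain U _ _ _ _ _ _ (d.lam ^ 2) (jet_of_smooth hU)
    (fun p hp => (eu p (bdry_sub hα hβ hp)).trans (d.dirichlet p hp)) hl i1
  rw [i2] at key
  have hw := int_wings hα hβ hU.continuous
  rw [i3] at hw
  have h0 : 0 ≤ ∫ p in Wings α β, d.u p ^ 2 := integral_nonneg fun p => sq_nonneg _
  have h1 := mul_le_mul_of_nonneg_left hw (sq_nonneg (d.lam ^ 2))
  have h2 : (d.lam ^ 2) ^ 2 ≤ d.lam ^ 8 := by
    rw [← pow_mul]; exact pow_le_pow_right₀ hlam' (by norm_num)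
  have h3 := mul_le_mul_of_nonneg_right h2 h0
  show C ≤ _
  linarith
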